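/- arXiv:2605.19483 — 7 statements merged into one kernel-verified Lean document; each statement's English description precedes it below -/
import Mathlib

section
/- Almost sure weak convergence of measure-valued martingales: Let S be a Polish space and (Ω, F, (F_n)_{n≥0}, P) a filtered probability space. Let (μ_n)_{n≥0} be a sequence of random Borel probability measures on S, adapted to (F_n), such that for every bounded continuous f : S → ℝ and every n ≥ 0, E[∫ f dμ_{n+1} | F_n] = ∫ f dμ_n almost surely (the conditional barycenter property). Then there exists a random Borel probability measure μ_∞ on S such that almost surely μ_n converges to μ_∞ in the topology of weak convergence of probability measures, and moreover E[∫ f dμ_∞] = E[∫ f dμ_0] for every bounded continuous f : S → ℝ. -/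
open MeasureTheory Filter Topology BoundedContinuousFunction

/-- A random probability measure is a measurable map into `ProbabilityMeasure S`, where the
latter carries the σ-algebra inherited from the space of measures (equivalently, the one
generated by the evaluation maps). -/
instance {S : Type*} [MeasurableSpace S] : MeasurableSpace (ProbabilityMeasure S) :=
  Subtype.instMeasurableSpace


section Helpers

open scoped NNReal ENNReal

variable {S : Type*} [MeasurableSpace S] [TopologicalSpace S] [PolishSpace S] [BorelSpace S]

/-- real version of a nonnegative bounded continuous function -/
noncomputable def mvmToReal (f : S →ᵇ ℝ≥0) : S →ᵇ ℝ :=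
  ⟨⟨fun x => (f x : ℝ), NNReal.continuous_coe.comp f.continuous⟩, f.map_bounded'⟩

omit [PolishSpace S] in
lemma mvm_lintegral (f : S →ᵇ ℝ≥0) (ν : Measure S) [IsFiniteMeasure ν] :
    ∫⁻ x, (f x : ℝ≥0∞) ∂ν = ENNReal.ofReal (∫ x, mvmToReal f x ∂ν) :=
  lintegral_coe_eq_integral (fun x => f x) ((mvmToReal f).integrable ν)

omit [PolishSpace S] in
lemma mvm_sm {Ω : Type*} {m : MeasurableSpace Ω} {κ : Ω → ProbabilityMeasure S}
    (h : Measurable κ) (f : S →ᵇ ℝ) :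
    StronglyMeasurable (fun ω => ∫ x, f x ∂(κ ω : Measure S)) := by
  let K : ProbabilityTheory.Kernel Ω S := ⟨fun ω => (κ ω : Measure S), measurable_subtype_coe.comp h⟩
  haveI : ProbabilityTheory.IsMarkovKernel K := ⟨fun ω => (κ ω).2⟩
  exact (f.continuous.stronglyMeasurable (β := ℝ)).integral_kernel (κ := K)

omit [PolishSpace S] in
lemma mvm_bdd (f : S →ᵇ ℝ) (ν : ProbabilityMeasure S) :
    ‖∫ x, f x ∂(ν : Measure S)‖ ≤ ‖f‖ := f.norm_integral_le_norm (ν : Measure S)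

omit [PolishSpace S] in
lemma mvm_int {Ω : Type*} {m : MeasurableSpace Ω} (P : Measure Ω) [IsFiniteMeasure P]
    {κ : Ω → ProbabilityMeasure S} (h : Measurable κ) (f : S →ᵇ ℝ) :
    Integrable (fun ω => ∫ x, f x ∂(κ ω : Measure S)) P :=
  Integrable.of_bound (mvm_sm h f).aestronglyMeasurable ‖f‖ (ae_of_all _ fun ω => mvm_bdd f _)

omit [PolishSpace S] in
lemma mvm_lint_bind {Ω : Type*} {m : MeasurableSpace Ω} (P : Measure Ω) [IsFiniteMeasure P]
    {κ : Ω → ProbabilityMeasure S} (h : Measurable κ) (f : S →ᵇ ℝ≥0) :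
    ∫⁻ x, (f x : ℝ≥0∞) ∂(P.bind (fun ω => (κ ω : Measure S)))
      = ENNReal.ofReal (∫ ω, ∫ x, mvmToReal f x ∂(κ ω : Measure S) ∂P) := by
  have hm : Measurable (fun ω => (κ ω : Measure S)) := measurable_subtype_coe.comp h
  rw [Measure.lintegral_bind hm.aemeasurable
    (by have := f.continuous.measurable; fun_prop)]
  simp_rw [mvm_lintegral]
  rw [ofReal_integral_eq_lintegral_ofReal (mvm_int P h _)]
  exact ae_of_all _ fun ω => integral_nonneg fun x => NNReal.coe_nonneg _

/-- deterministic part -/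
lemma mvm_det : ∃ g : ℕ → (S →ᵇ ℝ), ∀ ν : ℕ → ProbabilityMeasure S,
    IsTightMeasureSet {((ρ : ProbabilityMeasure S) : Measure S) | ρ ∈ Set.range ν} →
    (∀ i, ∃ c, Tendsto (fun n => ∫ x, g i x ∂(ν n : Measure S)) atTop (𝓝 c)) →
    ∃ ρ, Tendsto ν atTop (𝓝 ρ) := by
  let B := TopologicalSpace.countableBasis S
  haveI : Countable B := (TopologicalSpace.countable_countableBasis S).to_subtype
  let C : Finset B → Set S := fun t => ⋂ b ∈ t, (b : Set S)ᶜ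
  have hC : ∀ t, IsClosed (C t) := fun t => isClosed_biInter fun b _ =>
    (TopologicalSpace.isOpen_of_mem_countableBasis b.2).isClosed_compl
  obtain ⟨e, he⟩ := exists_surjective_nat (Finset B × ℕ)
  refine ⟨fun i => mvmToReal ((hC (e i).1).apprSeq (e i).2), fun ν ht hc => ?_⟩
  have hK := isCompact_closure_of_isTightMeasureSet ht
  have hmem : ∀ᶠ n in atTop, ν n ∈ closure (Set.range ν) :=
    Eventually.of_forall fun n => subset_closure ⟨n, rfl⟩
  choose c hc using hc
  have key : ∀ ρ : ProbabilityMeasure S, MapClusterPt ρ atTop ν → ∀ i,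
      ∫ x, mvmToReal ((hC (e i).1).apprSeq (e i).2) x ∂(ρ : Measure S) = c i := by
    intro ρ hρ i
    have hcont : Continuous (fun ρ : ProbabilityMeasure S =>
      ∫ x, mvmToReal ((hC (e i).1).apprSeq (e i).2) x ∂(ρ : Measure S)) :=
      ProbabilityMeasure.continuous_integral_boundedContinuousFunction _
    have h1 := hρ.continuousAt_comp hcont.continuousAt
    exact eq_of_nhds_neBot (ClusterPt.mono h1 (hc i))
  obtain ⟨ρ, -, hρ⟩ := hK.exists_mapClusterPt (u := ν) (f := atTop) (by simpa using hmem)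
  refine ⟨ρ, hK.tendsto_nhds_of_unique_mapClusterPt hmem fun ρ' _ hρ' => ?_⟩
  apply Subtype.ext
  change (ρ' : Measure S) = (ρ : Measure S)
  have hE : ∀ t, (ρ' : Measure S) (C t) = (ρ : Measure S) (C t) := by
    intro t
    have h1 := HasOuterApproxClosed.tendsto_lintegral_apprSeq (hC t) (ρ' : Measure S)
    have h2 := HasOuterApproxClosed.tendsto_lintegral_apprSeq (hC t) (ρ : Measure S)
    refine tendsto_nhds_unique h1 (h2.congr fun j => ?_)
    obtain ⟨i, hi⟩ := he (t, j)
    have a := key ρ hρ i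
    have b := key ρ' hρ' i
    rw [hi] at a b
    rw [mvm_lintegral, mvm_lintegral]
    exact congrArg _ (a.trans b.symm)
  refine ext_of_generate_finite (Set.range C) ?_ ?_ ?_ ?_
  · rw [BorelSpace.measurable_eq (α := S),
      (TopologicalSpace.isBasis_countableBasis S).borel_eq_generateFrom]
    apply le_antisymm
    · refine MeasurableSpace.generateFrom_le fun b hb => ?_
      have : C {⟨b, hb⟩} = bᶜ := by
        ext x
        simp only [C, Finset.mem_singleton, Set.iInter_iInter_eq_left]
      rw [← MeasurableSet.compl_iff, ← this]
      exact MeasurableSpace.measurableSet_generateFrom ⟨_, rfl⟩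
    · refine MeasurableSpace.generateFrom_le ?_
      rintro _ ⟨t, rfl⟩
      rw [← (TopologicalSpace.isBasis_countableBasis S).borel_eq_generateFrom]
      exact MeasurableSpace.measurableSet_generateFrom (hC t).isOpen_compl |>.of_compl
  · rintro _ ⟨t, rfl⟩ _ ⟨u, rfl⟩ -
    classical
    exact ⟨t ∪ u, by
      ext x
      simp only [C, Set.mem_iInter, Finset.mem_union, Set.mem_inter_iff]
      exact ⟨fun h => ⟨fun b hb => h b (Or.inl hb), fun b hb => h b (Or.inr hb)⟩,
        fun h b hb => hb.elim (h.1 b) (h.2 b)⟩⟩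
  · rintro _ ⟨t, rfl⟩
    exact hE t
  · simp

/-- measurability of limits -/
lemma mvm_meas {Ω : Type*} {m : MeasurableSpace Ω} {κ : ℕ → Ω → ProbabilityMeasure S}
    (h : ∀ n, Measurable (κ n)) {ρ : Ω → ProbabilityMeasure S}
    (hl : ∀ ω, Tendsto (fun n => κ n ω) atTop (𝓝 (ρ ω))) : Measurable ρ := by
  refine Measurable.subtype_mk (f := fun ω => (ρ ω : Measure S)) ?_
  refine Measurable.measure_of_isPiSystem_of_isProbabilityMeasure (S := {s | IsClosed s})
    ?_ isPiSystem_isClosed ?_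
  · rw [BorelSpace.measurable_eq (α := S), borel_eq_generateFrom_isClosed]
  intro C (hC : IsClosed C)
  refine measurable_of_tendsto_metrizable (f := fun j ω =>
    ∫⁻ x, (hC.apprSeq j x : ℝ≥0∞) ∂(ρ ω : Measure S)) (fun j => ?_) ?_
  · simp_rw [mvm_lintegral]
    refine ENNReal.measurable_ofReal.comp ?_
    refine measurable_of_tendsto_metrizable (f := fun n ω =>
      ∫ x, mvmToReal (hC.apprSeq j) x ∂(κ n ω : Measure S))
      (fun n => (mvm_sm (h n) _).measurable) ?_
    rw [tendsto_pi_nhds]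
    exact fun ω => ProbabilityMeasure.tendsto_iff_forall_integral_tendsto.1 (hl ω) _
  · rw [tendsto_pi_nhds]
    exact fun ω => HasOuterApproxClosed.tendsto_lintegral_apprSeq hC _

section Mart

variable {Ω : Type*} {mΩ : MeasurableSpace Ω} (P : Measure Ω) [IsProbabilityMeasure P]
    (F : Filtration ℕ mΩ)
    (μ : ℕ → Ω → ProbabilityMeasure S)
    (hadapt : ∀ n, Measurable[F n] (μ n))
    (hbary : ∀ (f : S →ᵇ ℝ) (n : ℕ),
      P[fun ω => ∫ x, f x ∂(μ (n + 1) ω : Measure S)|F n]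
        =ᵐ[P] fun ω => ∫ x, f x ∂(μ n ω : Measure S))

include hadapt hbary

omit [PolishSpace S] in
lemma mvm_mart (f : S →ᵇ ℝ) :
    Martingale (fun n ω => ∫ x, f x ∂(μ n ω : Measure S)) F P :=
  martingale_nat (fun n => mvm_sm (hadapt n) f)
    (fun n => mvm_int P ((hadapt n).mono (F.le n) le_rfl) f) fun n => (hbary f n).symm

omit [PolishSpace S] in
lemma mvm_conv (f : S →ᵇ ℝ) : ∀ᵐ ω ∂P, ∃ c,
    Tendsto (fun n => ∫ x, f x ∂(μ n ω : Measure S)) atTop (𝓝 c) := by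
  refine (mvm_mart P F μ hadapt hbary f).submartingale.exists_ae_tendsto_of_bdd
    (R := ‖f‖₊) fun n => ?_
  refine (eLpNorm_le_of_ae_bound (C := ‖f‖) (ae_of_all _ fun ω => mvm_bdd f _)).trans ?_
  simp

lemma mvm_mart_set {A : Set S} (hA : MeasurableSet A) :
    Martingale (fun n ω => (μ n ω : Measure S).real A) F P := by
  have hm : ∀ n, Measurable (fun ω => (μ n ω : Measure S)) := fun n =>
    measurable_subtype_coe.comp ((hadapt n).mono (F.le n) le_rfl)
  have hsm : ∀ n, StronglyMeasurable[F n] (fun ω => (μ n ω : Measure S).real A) := fun n =>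
    (((Measure.measurable_coe hA).comp
      (measurable_subtype_coe.comp (hadapt n))).ennreal_toReal).stronglyMeasurable
  refine martingale_of_setIntegral_eq_succ hsm (fun n => ?_) fun n s hs => ?_
  · refine Integrable.of_bound ((hsm n).mono (F.le n)).aestronglyMeasurable 1
      (ae_of_all _ fun ω => ?_)
    rw [Real.norm_of_nonneg measureReal_nonneg]
    exact measureReal_le_one
  · have hb : (P.restrict s).bind (fun ω => (μ n ω : Measure S))
        = (P.restrict s).bind (fun ω => (μ (n+1) ω : Measure S)) := by
      haveI : IsFiniteMeasure ((P.restrict s).bind (fun ω => (μ n ω : Measure S))) := by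
        constructor
        rw [Measure.bind_apply MeasurableSet.univ (hm n).aemeasurable]
        simp
      refine ext_of_forall_lintegral_eq_of_IsFiniteMeasure fun f => ?_
      rw [mvm_lint_bind _ ((hadapt n).mono (F.le n) le_rfl),
        mvm_lint_bind _ ((hadapt (n+1)).mono (F.le (n+1)) le_rfl)]
      congr 1
      exact (mvm_mart P F μ hadapt hbary (mvmToReal f)).setIntegral_eq (Nat.le_succ n) hs
    have hr : ∀ k, ∫ ω in s, (μ k ω : Measure S).real A ∂P
        = ((P.restrict s).bind (fun ω => (μ k ω : Measure S)) A).toReal := by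
      intro k
      rw [Measure.bind_apply hA (hm k).aemeasurable]
      exact integral_toReal ((Measure.measurable_coe hA).comp (hm k)).aemeasurable
        (ae_of_all _ fun ω => measure_lt_top _ _)
    rw [hr, hr, hb]

lemma mvm_max {A : Set S} (hA : MeasurableSet A) (ε : ℝ≥0) :
    ε * P {ω | ∃ n, (ε : ℝ) ≤ (μ n ω : Measure S).real A}
      ≤ P.bind (fun ω => (μ 0 ω : Measure S)) A := by
  have hM := mvm_mart_set P F μ hadapt hbary hA
  have hm : Measurable (fun ω => (μ 0 ω : Measure S)) :=
    measurable_subtype_coe.comp ((hadapt 0).mono (F.le 0) le_rfl)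
  let E : ℕ → Set Ω := fun n => {ω | (ε : ℝ) ≤
    (Finset.range (n + 1)).sup' Finset.nonempty_range_add_one
      fun k => (μ k ω : Measure S).real A}
  have hE : {ω | ∃ n, (ε : ℝ) ≤ (μ n ω : Measure S).real A} = ⋃ n, E n := by
    ext ω
    simp only [E, Set.mem_setOf_eq, Set.mem_iUnion, Finset.le_sup'_iff, Finset.mem_range]
    constructor
    · rintro ⟨n, hn⟩
      exact ⟨n, n, by omega, hn⟩
    · rintro ⟨_, n, _, hn⟩
      exact ⟨n, hn⟩
  have hmono : Monotone E := by
    intro a b hab ω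
    simp only [E, Set.mem_setOf_eq, Finset.le_sup'_iff, Finset.mem_range]
    rintro ⟨n, hn, h⟩
    exact ⟨n, by omega, h⟩
  rw [hE, hmono.measure_iUnion, ENNReal.mul_iSup]
  refine iSup_le fun n => ?_
  refine (maximal_ineq hM.submartingale (fun k ω => measureReal_nonneg) n).trans ?_
  have h1 : ∫ ω in E n, (μ n ω : Measure S).real A ∂P ≤ ∫ ω, (μ n ω : Measure S).real A ∂P :=
    setIntegral_le_integral (hM.integrable n) (ae_of_all _ fun ω => measureReal_nonneg)
  have h2 : ∫ ω, (μ n ω : Measure S).real A ∂P = ∫ ω, (μ 0 ω : Measure S).real A ∂P := by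
    have := hM.setIntegral_eq (Nat.zero_le n) (@MeasurableSet.univ _ (F 0))
    simpa using this.symm
  refine (ENNReal.ofReal_le_ofReal (h1.trans h2.le)).trans ?_
  rw [Measure.bind_apply hA hm.aemeasurable]
  refine (ofReal_integral_eq_lintegral_ofReal (hM.integrable 0)
    (ae_of_all _ fun ω => measureReal_nonneg)).le.trans (lintegral_mono fun ω => ?_)
  simp [measureReal_def]

lemma mvm_tight : ∀ᵐ ω ∂P, IsTightMeasureSet
    {((ρ : ProbabilityMeasure S) : Measure S) | ρ ∈ Set.range fun n => μ n ω} := by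
  have hm : Measurable (fun ω => (μ 0 ω : Measure S)) :=
    measurable_subtype_coe.comp ((hadapt 0).mono (F.le 0) le_rfl)
  have main : ∀ ε : ℝ≥0, 0 < ε → ∀ᵐ ω ∂P, ∃ K : Set S, IsCompact K ∧
      ∀ n, (μ n ω : Measure S) Kᶜ ≤ ε := by
    intro ε hε
    rw [ae_iff]
    have hfin : IsFiniteMeasure (P.bind (fun ω => (μ 0 ω : Measure S))) := by
      constructor
      rw [Measure.bind_apply MeasurableSet.univ hm.aemeasurable]
      simp
    have ht := isTightMeasureSet_iff_exists_isCompact_measure_compl_le.1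
      (isTightMeasureSet_singleton (μ := P.bind (fun ω => (μ 0 ω : Measure S))))
    have hz : (ε : ℝ≥0∞) * P {ω | ¬ ∃ K : Set S, IsCompact K ∧
        ∀ n, (μ n ω : Measure S) Kᶜ ≤ ε} ≤ 0 := by
      refine le_of_forall_gt fun δ hδ => ?_
      obtain ⟨δ', h0, hδ'⟩ := exists_between hδ
      obtain ⟨K, hK, hKδ⟩ := ht δ' h0
      refine lt_of_le_of_lt ?_ hδ'
      refine le_trans ?_ (hKδ _ rfl)
      refine le_trans ?_ (mvm_max P F μ hadapt hbary hK.measurableSet.compl ε)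
      gcongr
      intro hn
      rename_i ω
      push Not at hn
      obtain ⟨n, hn⟩ := hn K hK
      refine ⟨n, ?_⟩
      have := ENNReal.toReal_mono (measure_ne_top _ _) hn.le
      simpa [measureReal_def] using this
    simpa [hε.ne'] using hz
  have hall : ∀ᵐ ω ∂P, ∀ k : ℕ, ∃ K : Set S, IsCompact K ∧
      ∀ n, (μ n ω : Measure S) Kᶜ ≤ ((1 / (k + 1 : ℝ≥0) : ℝ≥0) : ℝ≥0∞) :=
    ae_all_iff.2 fun k => main _ (by positivity)
  filter_upwards [hall] with ω hω
  rw [isTightMeasureSet_iff_exists_isCompact_measure_compl_le]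
  intro ε hε
  obtain ⟨k, hk⟩ := ENNReal.exists_inv_nat_lt hε.ne'
  obtain ⟨K, hK, h⟩ := hω k
  refine ⟨K, hK, ?_⟩
  rintro _ ⟨_, ⟨n, rfl⟩, rfl⟩
  refine (h n).trans (le_trans ?_ hk.le)
  rw [one_div, ENNReal.coe_inv (by positivity)]
  push_cast
  exact ENNReal.inv_le_inv.2 le_self_add

end Mart

end Helpers

/-- **Almost sure weak convergence of measure-valued martingales.**
Let `S` be a Polish space and `(μ_n)` an adapted sequence of random Borel probability
measures on a filtered probability space satisfying the conditional barycenter property: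
`E[∫ f dμ_{n+1} | F_n] = ∫ f dμ_n` a.s. for every bounded continuous `f`.  Then there is a
random Borel probability measure `μ_∞` such that almost surely `μ_n → μ_∞` weakly, and
moreover `E[∫ f dμ_∞] = E[∫ f dμ_0]` for every bounded continuous `f`. -/
theorem measure_valued_martingale_convergence
    {S : Type*} [MeasurableSpace S] [TopologicalSpace S] [PolishSpace S] [BorelSpace S]
    {Ω : Type*} {mΩ : MeasurableSpace Ω} (P : Measure Ω) [IsProbabilityMeasure P]
    (F : Filtration ℕ mΩ)
    (μ : ℕ → Ω → ProbabilityMeasure S)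
    (hadapt : ∀ n, Measurable[F n] (μ n))
    (hbary : ∀ (f : S →ᵇ ℝ) (n : ℕ),
      P[fun ω => ∫ x, f x ∂(μ (n + 1) ω : Measure S)|F n]
        =ᵐ[P] fun ω => ∫ x, f x ∂(μ n ω : Measure S)) :
    ∃ μinf : Ω → ProbabilityMeasure S, Measurable μinf ∧
      (∀ᵐ ω ∂P, Tendsto (fun n => μ n ω) atTop (𝓝 (μinf ω))) ∧
      ∀ f : S →ᵇ ℝ,
        (∫ ω, (∫ x, f x ∂(μinf ω : Measure S)) ∂P)
          = ∫ ω, (∫ x, f x ∂(μ 0 ω : Measure S)) ∂P := by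
  classical
  obtain ⟨g, hg⟩ := mvm_det (S := S)
  have hmeas : ∀ n, Measurable (μ n) := fun n => (hadapt n).mono (F.le n) le_rfl
  have hconv : ∀ᵐ ω ∂P, ∃ ρ, Tendsto (fun n => μ n ω) atTop (𝓝 ρ) := by
    filter_upwards [mvm_tight P F μ hadapt hbary,
      ae_all_iff.2 fun i => mvm_conv P F μ hadapt hbary (g i)] with ω h1 h2
    exact hg _ h1 h2
  obtain ⟨G, hGsub, hGm, hG⟩ := exists_measurable_superset_of_null (ae_iff.1 hconv)
  have hlim : ∀ ω, ω ∉ G → ∃ ρ, Tendsto (fun n => μ n ω) atTop (𝓝 ρ) := fun ω hω => by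
    by_contra h
    exact hω (hGsub h)
  let κ : ℕ → Ω → ProbabilityMeasure S := fun n => G.piecewise (μ 0) (μ n)
  have hκ : ∀ n, Measurable (κ n) := fun n => Measurable.piecewise hGm (hmeas 0) (hmeas n)
  have hκl : ∀ ω, ∃ ρ, Tendsto (fun n => κ n ω) atTop (𝓝 ρ) := by
    intro ω
    by_cases hω : ω ∈ G
    · exact ⟨μ 0 ω, by simp [κ, hω]⟩
    · simpa [κ, hω] using hlim ω hω
  choose ρ hρ using hκl
  have hρm := mvm_meas hκ hρ
  have hae : ∀ᵐ ω ∂P, Tendsto (fun n => μ n ω) atTop (𝓝 (ρ ω)) := by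
    filter_upwards [measure_eq_zero_iff_ae_notMem.1 hG] with ω hω
    simpa [κ, hω] using hρ ω
  refine ⟨ρ, hρm, hae, fun f => ?_⟩
  have hM := mvm_mart P F μ hadapt hbary f
  have h1 : Tendsto (fun n => ∫ ω, (∫ x, f x ∂(μ n ω : Measure S)) ∂P) atTop
      (𝓝 (∫ ω, (∫ x, f x ∂(ρ ω : Measure S)) ∂P)) := by
    refine tendsto_integral_of_dominated_convergence (fun _ => ‖f‖)
      (fun n => (mvm_sm (hmeas n) f).aestronglyMeasurable) (integrable_const _)
      (fun n => ae_of_all _ fun ω => mvm_bdd f _) ?_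
    filter_upwards [hae] with ω hω
    exact ProbabilityMeasure.tendsto_iff_forall_integral_tendsto.1 hω f
  refine tendsto_nhds_unique h1 (tendsto_const_nhds.congr fun n => ?_)
  have := hM.setIntegral_eq (Nat.zero_le n) (@MeasurableSet.univ _ (F 0))
  simpa using this
end

section
/- Collapse of the pure generative model (Theorem on collapse, case a = 0): Let S be a Polish space and μ_0 a Borel probability measure on S. Fix N ≥ 1 and define recursively a sequence of random Borel probability measures (μ_n)_{n≥0} on a filtered probability space as follows: given F_n (the σ-algebra generated by all samples up to time n), at stage n one draws X_n^1,…,X_n^N which, conditionally on F_n, are i.i.d. with common law μ_n, and sets μ_{n+1} = (1/N) Σ_{i=1}^N δ_{X_n^i}. Then there exists an S-valued random variable γ such that almost surely μ_n converges weakly to δ_γ, and the law of γ has barycenter μ_0, i.e., E[f(γ)] = ∫ f dμ_0 for every bounded continuous f : S → ℝ. -/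
open MeasureTheory Filter Topology BoundedContinuousFunction ENNReal

lemma emp_integral {S : Type*} [MeasurableSpace S] [TopologicalSpace S] [PolishSpace S]
    [BorelSpace S] {N : ℕ} (x : Fin N → S) (f : S →ᵇ ℝ) :
    ∫ y, f y ∂((N : ℝ≥0∞)⁻¹ • ∑ i : Fin N, Measure.dirac (x i))
      = (N : ℝ)⁻¹ * ∑ i, f (x i) := by
  rw [integral_smul_measure, integral_finsetSum_measure]
  · simp
  · intro i _
    exact f.integrable _

lemma pair_integral {S : Type*} [MeasurableSpace S] [TopologicalSpace S] [PolishSpace S]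
    [BorelSpace S] {N : ℕ} (ν : Measure S) [IsProbabilityMeasure ν] {i j : Fin N} (hij : i ≠ j)
    (k : (S × S) →ᵇ ℝ) :
    ∫ v, k (v i, v j) ∂(Measure.pi fun _ : Fin N => ν) = ∫ x, ∫ y, k (x, y) ∂ν ∂ν := by
  have hI : ProbabilityTheory.iIndepFun (fun (i : Fin N) (v : Fin N → S) => v i)
      (Measure.pi fun _ : Fin N => ν) :=
    ProbabilityTheory.iIndepFun_pi (X := fun _ x => x) (fun _ => aemeasurable_id)
  have h2 := hI.indepFun hij
  rw [ProbabilityTheory.indepFun_iff_map_prod_eq_prod_map_map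
    (measurable_pi_apply i).aemeasurable (measurable_pi_apply j).aemeasurable] at h2
  have e : ∀ i : Fin N, (Measure.pi fun _ : Fin N => ν).map (fun v => v i) = ν := fun i =>
    (measurePreserving_eval (fun _ : Fin N => ν) i).map_eq
  rw [e i, e j] at h2
  have h3 : ∫ v, k (v i, v j) ∂(Measure.pi fun _ : Fin N => ν) = ∫ z, k z ∂(ν.prod ν) := by
    rw [← h2, integral_map]
    · exact ((measurable_pi_apply i).prodMk (measurable_pi_apply j)).aemeasurable
    · exact k.continuous.aestronglyMeasurable
  rw [h3, integral_prod _ (k.integrable _)]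

lemma emp_pair_integral {S : Type*} [MeasurableSpace S] [TopologicalSpace S] [PolishSpace S]
    [BorelSpace S] {N : ℕ} (x : Fin N → S) (k : (S × S) →ᵇ ℝ) (ν : Measure S)
    (hν : ν = (N : ℝ≥0∞)⁻¹ • ∑ i : Fin N, Measure.dirac (x i)) [IsProbabilityMeasure ν] :
    ∫ y, ∫ z, k (y, z) ∂ν ∂ν = (N : ℝ)⁻¹ * ∑ a, (N : ℝ)⁻¹ * ∑ b, k (x a, x b) := by
  have h1 : ∀ y, ∫ z, k (y, z) ∂ν = (N : ℝ)⁻¹ * ∑ b, k (y, x b) := by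
    intro y
    rw [hν]
    exact emp_integral x (k.compContinuous ⟨fun z => (y, z), by fun_prop⟩)
  simp_rw [h1]
  let f : S →ᵇ ℝ := (N : ℝ)⁻¹ • ∑ b, (k.compContinuous ⟨fun y => (y, x b), by fun_prop⟩)
  have hf : ∀ y, f y = (N : ℝ)⁻¹ * ∑ b, k (y, x b) := by
    intro y; simp [f]
  simp_rw [← hf]
  rw [hν]
  exact emp_integral x f

lemma simple_approx {S : Type*} [MeasurableSpace S] [TopologicalSpace S] [PolishSpace S]
    [BorelSpace S] {Ω : Type*} {m : MeasurableSpace Ω} (Y : Ω → S) (hY : Measurable Y) (s0 : S) :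
    ∃ (Yk : ℕ → Ω → S) (R : ℕ → Finset S), (∀ n, Measurable (Yk n)) ∧ (∀ n ω, Yk n ω ∈ R n) ∧
      ∀ ω, Tendsto (fun n => Yk n ω) atTop (𝓝 (Y ω)) := by
  let _ := TopologicalSpace.upgradeIsCompletelyMetrizable S
  refine ⟨fun n => SimpleFunc.approxOn Y hY Set.univ s0 (Set.mem_univ _) n,
    fun n => (SimpleFunc.approxOn Y hY Set.univ s0 (Set.mem_univ _) n).range,
    fun n => SimpleFunc.measurable _, fun n ω => SimpleFunc.mem_range_self _ _, fun ω => ?_⟩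
  exact SimpleFunc.tendsto_approxOn hY (Set.mem_univ _) (by simp)

/-- Freezing. -/
lemma freeze {S : Type*} [MeasurableSpace S] [TopologicalSpace S] [PolishSpace S] [BorelSpace S]
    {Ω : Type*} (m : MeasurableSpace Ω) {mΩ : MeasurableSpace Ω} (P : Measure Ω)
    [IsProbabilityMeasure P] (hm : m ≤ mΩ) {N : ℕ} (W : Fin N → Ω → S)
    (hW : ∀ i, Measurable[m] (W i)) (Y Z : Ω → S) (hY : Measurable[m] Y) (hZ : Measurable Z)
    (h : ∀ (f : S →ᵇ ℝ) (A : Set Ω), MeasurableSet[m] A →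
      ∫ ω in A, f (Z ω) ∂P = ∫ ω in A, (N : ℝ)⁻¹ * ∑ i, f (W i ω) ∂P) (k : (S × S) →ᵇ ℝ) :
    ∫ ω, k (Y ω, Z ω) ∂P = ∫ ω, (N : ℝ)⁻¹ * ∑ i, k (Y ω, W i ω) ∂P := by
  let _ := TopologicalSpace.upgradeIsCompletelyMetrizable S
  have hW' : ∀ i, Measurable (W i) := fun i => (hW i).mono hm le_rfl
  have : Nonempty S := by
    have : Nonempty Ω := P.nonempty_of_neZero
    exact this.map Z
  obtain ⟨s0⟩ := this
  obtain ⟨Yk, R, hYkm, hR, hlim⟩ := simple_approx Y hY s0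
  have hYk : ∀ n, Measurable (Yk n) := fun n => (hYkm n).mono hm le_rfl
  -- simple case
  have hs : ∀ n, ∫ ω, k (Yk n ω, Z ω) ∂P = ∫ ω, (N : ℝ)⁻¹ * ∑ i, k (Yk n ω, W i ω) ∂P := by
    intro n
    classical
    let A : S → Set Ω := fun s => Yk n ⁻¹' {s}
    have hA : ∀ s, MeasurableSet[m] (A s) := fun s => hYkm n (MeasurableSet.singleton s)
    have hU : (⋃ s ∈ (R n), A s) = Set.univ := by
      ext ω; simp [A, hR]
    have hd : Set.Pairwise (↑(R n)) (Function.onFun Disjoint A) := by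
      intro s _ t _ hst
      refine Set.disjoint_left.2 ?_
      intro ω h1 h2
      exact hst (h1.symm.trans h2)
    have hi1 : Integrable (fun ω => k (Yk n ω, Z ω)) P := by
      refine Integrable.of_bound
        (k.continuous.measurable.comp ((hYk n).prodMk hZ)).aestronglyMeasurable ‖k‖ ?_
      exact ae_of_all _ fun ω => k.norm_coe_le_norm _
    have hi2 : Integrable (fun ω => (N : ℝ)⁻¹ * ∑ i, k (Yk n ω, W i ω)) P := by
      refine Integrable.const_mul (integrable_finsetSum _ fun i _ => ?_) _
      refine Integrable.of_bound
        (k.continuous.measurable.comp ((hYk n).prodMk (hW' i))).aestronglyMeasurable ‖k‖ ?_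
      exact ae_of_all _ fun ω => k.norm_coe_le_norm _
    rw [← setIntegral_univ (μ := P), ← setIntegral_univ (μ := P) (f := fun ω => (N : ℝ)⁻¹ * _),
      ← hU, integral_biUnion_finset _ (fun s _ => hm _ (hA s)) hd (fun s _ => hi1.integrableOn),
      integral_biUnion_finset _ (fun s _ => hm _ (hA s)) hd (fun s _ => hi2.integrableOn)]
    refine Finset.sum_congr rfl fun s _ => ?_
    have e1 : ∫ ω in A s, k (Yk n ω, Z ω) ∂P = ∫ ω in A s, k (s, Z ω) ∂P := by
      refine setIntegral_congr_fun (hm _ (hA s)) fun ω hω => ?_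
      have : Yk n ω = s := hω
      simp [this]
    have e2 : ∫ ω in A s, (N : ℝ)⁻¹ * ∑ i, k (Yk n ω, W i ω) ∂P
        = ∫ ω in A s, (N : ℝ)⁻¹ * ∑ i, k (s, W i ω) ∂P := by
      refine setIntegral_congr_fun (hm _ (hA s)) fun ω hω => ?_
      have : Yk n ω = s := hω
      simp [this]
    rw [e1, e2]
    exact h (k.compContinuous ⟨fun z => (s, z), by fun_prop⟩) (A s) (hA s)
  have l1 : Tendsto (fun n => ∫ ω, k (Yk n ω, Z ω) ∂P) atTop (𝓝 (∫ ω, k (Y ω, Z ω) ∂P)) := by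
    refine tendsto_integral_of_dominated_convergence (fun _ => ‖k‖) (fun n => ?_)
      (integrable_const _) (fun n => ae_of_all _ fun ω => k.norm_coe_le_norm _)
      (ae_of_all _ fun ω => ?_)
    · exact (k.continuous.measurable.comp ((hYk n).prodMk hZ)).aestronglyMeasurable
    · exact (k.continuous.tendsto _).comp ((hlim ω).prodMk_nhds tendsto_const_nhds)
  have l2 : Tendsto (fun n => ∫ ω, (N : ℝ)⁻¹ * ∑ i, k (Yk n ω, W i ω) ∂P) atTop
      (𝓝 (∫ ω, (N : ℝ)⁻¹ * ∑ i, k (Y ω, W i ω) ∂P)) := by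
    refine tendsto_integral_of_dominated_convergence (fun _ => (N : ℝ)⁻¹ * ∑ i : Fin N, ‖k‖)
      (fun n => ?_)
      (integrable_const _) (fun n => ae_of_all _ fun ω => ?_)
      (ae_of_all _ fun ω => ?_)
    · refine Measurable.aestronglyMeasurable (Measurable.const_mul
        (Finset.measurable_fun_sum _ fun i _ => ?_) _)
      exact k.continuous.measurable.comp ((hYk n).prodMk (hW' i))
    · rw [norm_mul, Real.norm_of_nonneg (by positivity : (0:ℝ) ≤ (N : ℝ)⁻¹)]
      gcongr
      exact norm_sum_le_of_le _ fun i _ => k.norm_coe_le_norm _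
    · refine Tendsto.const_mul _ (tendsto_finsetSum _ fun i _ => ?_)
      exact (k.continuous.tendsto _).comp ((hlim ω).prodMk_nhds tendsto_const_nhds)
  refine tendsto_nhds_unique l1 ?_
  simp_rw [hs]
  exact l2

lemma ae_summable_of {Ω : Type*} {mΩ : MeasurableSpace Ω} (P : Measure Ω)
    (u : ℕ → Ω → ℝ) (hu : ∀ n, Integrable (u n) P) (h0 : ∀ n ω, 0 ≤ u n ω)
    (hs : Summable fun n => ∫ ω, u n ω ∂P) : ∀ᵐ ω ∂P, Summable fun n => u n ω := by
  have h1 : ∫⁻ ω, ∑' n, ENNReal.ofReal (u n ω) ∂P ≠ ∞ := by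
    rw [lintegral_tsum (fun n => (hu n).aemeasurable.ennreal_ofReal)]
    have : ∀ n, ∫⁻ ω, ENNReal.ofReal (u n ω) ∂P = ENNReal.ofReal (∫ ω, u n ω ∂P) := fun n =>
      (ofReal_integral_eq_lintegral_ofReal (hu n) (ae_of_all _ (h0 n))).symm
    simp_rw [this]
    exact hs.tsum_ofReal_ne_top
  have h2 := ae_lt_top' (AEMeasurable.tsum
    fun n => (hu n).aemeasurable.ennreal_ofReal) h1
  filter_upwards [h2] with ω hω
  have := ENNReal.summable_toReal hω.ne
  refine this.congr fun n => ?_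
  rw [ENNReal.toReal_ofReal (h0 n ω)]

/-- **Collapse of the pure generative model (case `a = 0`).**
Let `S` be a Polish space and `μ₀` a Borel probability measure on `S`.  Fix `N ≥ 1` and let
`(μ_n)` be the measure-valued chain in which, given `F_n`, the stage-`n` samples
`X_n^1, …, X_n^N` are conditionally i.i.d. with common law `μ_n`, and
`μ_{n+1} = (1/N) ∑_i δ_{X_n^i}` is their empirical measure, with `μ_0 ≡ μ₀`.  Then there is
an `S`-valued random variable `γ` such that almost surely `μ_n → δ_γ` weakly, and the law of
`γ` has barycenter `μ₀`, i.e. `E[f(γ)] = ∫ f dμ₀` for every bounded continuous `f`. -/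
theorem generative_model_collapse
    {S : Type*} [MeasurableSpace S] [TopologicalSpace S] [PolishSpace S] [BorelSpace S]
    {Ω : Type*} {mΩ : MeasurableSpace Ω} (P : Measure Ω) [IsProbabilityMeasure P]
    (μ₀ : Measure S) [IsProbabilityMeasure μ₀]
    (N : ℕ) (hN : 1 ≤ N)
    (F : Filtration ℕ mΩ)
    (X : ℕ → Fin N → Ω → S)
    (hXmeas : ∀ n i, Measurable[F (n + 1)] (X n i))
    (μ : ℕ → Ω → Measure S)
    (hprob : ∀ n ω, IsProbabilityMeasure (μ n ω))
    (hμ0 : ∀ ω, μ 0 ω = μ₀)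
    (hemp : ∀ n ω, μ (n + 1) ω = (N : ℝ≥0∞)⁻¹ • ∑ i : Fin N, Measure.dirac (X n i ω))
    (hcondiid : ∀ (n : ℕ) (g : ((Fin N → S) →ᵇ ℝ)),
      P[fun ω => g (fun i => X n i ω)|F n]
        =ᵐ[P] fun ω => ∫ v, g v ∂(Measure.pi fun _ : Fin N => μ n ω)) :
    ∃ γ : Ω → S, Measurable γ ∧
      (∀ᵐ ω ∂P, ∀ f : S →ᵇ ℝ,
        Tendsto (fun n => ∫ x, f x ∂(μ n ω)) atTop (𝓝 (f (γ ω)))) ∧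
      ∀ f : S →ᵇ ℝ, (∫ ω, f (γ ω) ∂P) = ∫ x, f x ∂μ₀ := by
  classical
  let _ := TopologicalSpace.upgradeIsCompletelyMetrizable S
  have hXm : ∀ n i, Measurable (X n i) := fun n i => (hXmeas n i).mono (F.le _) le_rfl
  have hN0 : (0 : ℝ) < N := by exact_mod_cast hN
  -- set integral form
  have hset : ∀ (n : ℕ) (g : ((Fin N → S) →ᵇ ℝ)) (A : Set Ω), MeasurableSet[F n] A →
      ∫ ω in A, g (fun i => X n i ω) ∂P
        = ∫ ω in A, ∫ v, g v ∂(Measure.pi fun _ : Fin N => μ n ω) ∂P := by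
    intro n g A hA
    have hi : Integrable (fun ω => g (fun i => X n i ω)) P := by
      refine Integrable.of_bound
        (g.continuous.measurable.comp (measurable_pi_lambda _ (hXm n))).aestronglyMeasurable ‖g‖ ?_
      exact ae_of_all _ fun ω => g.norm_coe_le_norm _
    rw [← setIntegral_condExp (F.le n) hi hA]
    refine integral_congr_ae (ae_restrict_of_ae (hcondiid n g))
  have hone : ∀ (n : ℕ) (i : Fin N) (f : S →ᵇ ℝ) (A : Set Ω), MeasurableSet[F n] A →
      ∫ ω in A, f (X n i ω) ∂P = ∫ ω in A, ∫ x, f x ∂(μ n ω) ∂P := by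
    intro n i f A hA
    refine (hset n (f.compContinuous ⟨fun v => v i, by fun_prop⟩) A hA).trans ?_
    congr 1
    ext ω
    have := hprob n ω
    conv_rhs => rw [← (measurePreserving_eval (fun _ : Fin N => μ n ω) i).map_eq]
    rw [integral_map]
    · rfl
    · exact (measurable_pi_apply i).aemeasurable
    · exact f.continuous.aestronglyMeasurable
  have hone' : ∀ (n : ℕ) (i : Fin N) (f : S →ᵇ ℝ) (A : Set Ω), MeasurableSet[F (n+1)] A →
      ∫ ω in A, f (X (n+1) i ω) ∂P = ∫ ω in A, (N : ℝ)⁻¹ * ∑ j, f (X n j ω) ∂P := by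
    intro n i f A hA
    rw [hone _ i f A hA]
    simp_rw [hemp, emp_integral]
  have hint : ∀ (n : ℕ) (i : Fin N) (f : S →ᵇ ℝ), Integrable (fun ω => f (X n i ω)) P := by
    intro n i f
    refine Integrable.of_bound (f.continuous.measurable.comp (hXm n i)).aestronglyMeasurable ‖f‖ ?_
    exact ae_of_all _ fun ω => f.norm_coe_le_norm _
  have hmean : ∀ (n : ℕ) (i : Fin N) (f : S →ᵇ ℝ), ∫ ω, f (X n i ω) ∂P = ∫ x, f x ∂μ₀ := by
    intro n
    induction n with
    | zero =>
      intro i f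
      have := hone 0 i f Set.univ MeasurableSet.univ
      simpa [hμ0] using this
    | succ n ih =>
      intro i f
      have := hone' n i f Set.univ MeasurableSet.univ
      rw [setIntegral_univ, setIntegral_univ, integral_const_mul,
        integral_finsetSum _ (fun j _ => hint n j f)] at this
      rw [this]
      simp_rw [ih]
      simp only [Finset.sum_const, Finset.card_univ, Fintype.card_fin, nsmul_eq_mul]
      field_simp
  -- truncated distance
  let k : (S × S) →ᵇ ℝ := BoundedContinuousFunction.ofNormedAddCommGroup
    (fun p => min (dist p.1 p.2) 1) (by fun_prop) 1 (by
      intro p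
      rw [Real.norm_of_nonneg (le_min dist_nonneg zero_le_one)]
      exact min_le_right _ _)
  have hk : ∀ x y, k (x, y) = min (dist x y) 1 := fun x y => rfl
  have hk0 : ∀ p, 0 ≤ k p := fun p => le_min dist_nonneg zero_le_one
  have hkint : ∀ (U V : Ω → S), Measurable U → Measurable V →
      Integrable (fun ω => k (U ω, V ω)) P := by
    intro U V hU hV
    refine Integrable.of_bound
      (k.continuous.measurable.comp (hU.prodMk hV)).aestronglyMeasurable ‖k‖ ?_
    exact ae_of_all _ fun ω => k.norm_coe_le_norm _
  let a : ℕ → ℝ := fun n => ∑ i, ∑ j, ∫ ω, k (X n i ω, X n j ω) ∂P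
  have hpair : ∀ n (i j : Fin N), i ≠ j →
      ∫ ω, k (X (n+1) i ω, X (n+1) j ω) ∂P = (N : ℝ)⁻¹ * ((N : ℝ)⁻¹ * a n) := by
    intro n i j hij
    have h1 := hset (n+1) (k.compContinuous ⟨fun v => (v i, v j), by fun_prop⟩) Set.univ
      MeasurableSet.univ
    rw [setIntegral_univ, setIntegral_univ] at h1
    refine h1.trans ?_
    have h2 : ∀ ω, ∫ v, (k.compContinuous ⟨fun v : Fin N → S => (v i, v j), by fun_prop⟩) v
        ∂(Measure.pi fun _ : Fin N => μ (n+1) ω)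
        = (N : ℝ)⁻¹ * ∑ a, (N : ℝ)⁻¹ * ∑ b, k (X n a ω, X n b ω) := by
      intro ω
      have := hprob (n+1) ω
      exact (pair_integral (μ (n+1) ω) hij k).trans
        (emp_pair_integral (fun i => X n i ω) k _ (hemp n ω))
    simp_rw [h2]
    have hi := fun a b => hkint _ _ (hXm n a) (hXm n b)
    rw [integral_const_mul, integral_finsetSum _ (fun a _ =>
      (integrable_finsetSum _ fun b _ => hi a b).const_mul _)]
    congr 1
    simp_rw [integral_const_mul, ← Finset.mul_sum]
    congr 1
    refine Finset.sum_congr rfl fun a _ => ?_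
    exact integral_finsetSum _ fun b _ => hi a b
  have ha : ∀ n, a (n+1) = (1 - (N : ℝ)⁻¹) * a n := by
    intro n
    have : ∀ i j : Fin N, ∫ ω, k (X (n+1) i ω, X (n+1) j ω) ∂P
        = (N : ℝ)⁻¹ * ((N : ℝ)⁻¹ * a n) - if i = j then (N : ℝ)⁻¹ * ((N : ℝ)⁻¹ * a n) else 0 := by
      intro i j
      split_ifs with h
      · subst h; simp [hk]
      · rw [hpair n i j h, sub_zero]
    change (∑ i, ∑ j, ∫ ω, k (X (n+1) i ω, X (n+1) j ω) ∂P) = _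
    simp_rw [this, Finset.sum_sub_distrib]
    simp
    field_simp
  have hageom : ∀ n, a n = (1 - (N : ℝ)⁻¹) ^ n * a 0 := by
    intro n
    induction n with
    | zero => simp
    | succ n ih => rw [ha, ih]; ring
  have hasum : Summable a := by
    have : a = fun n => (1 - (N : ℝ)⁻¹) ^ n * a 0 := funext hageom
    rw [this]
    refine Summable.mul_right _ (summable_geometric_of_lt_one ?_ ?_)
    · have : (N : ℝ)⁻¹ ≤ 1 := inv_le_one_of_one_le₀ (by exact_mod_cast hN)
      linarith
    · have : 0 < (N : ℝ)⁻¹ := by positivity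
      linarith
  have hle : ∀ n i j, ∫ ω, k (X n i ω, X n j ω) ∂P ≤ a n := by
    intro n i j
    have h0 : ∀ i j, 0 ≤ ∫ ω, k (X n i ω, X n j ω) ∂P := fun i j => integral_nonneg fun ω => hk0 _
    calc _ ≤ ∑ j, ∫ ω, k (X n i ω, X n j ω) ∂P :=
          Finset.single_le_sum (f := fun j => ∫ ω, k (X n i ω, X n j ω) ∂P)
            (fun j _ => h0 i j) (Finset.mem_univ j)
      _ ≤ _ := Finset.single_le_sum (f := fun i => ∑ j, ∫ ω, k (X n i ω, X n j ω) ∂P)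
            (fun i _ => Finset.sum_nonneg fun j _ => h0 i j) (Finset.mem_univ i)
  let i0 : Fin N := ⟨0, hN⟩
  have hA : ∀ j, ∀ᵐ ω ∂P, Summable fun n => k (X n i0 ω, X n j ω) := by
    intro j
    refine ae_summable_of P _ (fun n => hkint _ _ (hXm n i0) (hXm n j)) (fun n ω => hk0 _) ?_
    exact Summable.of_nonneg_of_le (fun n => integral_nonneg fun ω => hk0 _)
      (fun n => hle n i0 j) hasum
  have hB : ∀ᵐ ω ∂P, Summable fun n => k (X n i0 ω, X (n+1) i0 ω) := by
    refine ae_summable_of P _ (fun n => hkint _ _ (hXm n i0) (hXm (n+1) i0)) (fun n ω => hk0 _) ?_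
    refine Summable.of_nonneg_of_le (fun n => integral_nonneg fun ω => hk0 _)
      (fun n => ?_) hasum
    rw [freeze (F (n+1)) P (F.le _) (X n) (hXmeas n) (X n i0) (X (n+1) i0) (hXmeas n i0)
      (hXm _ _) (fun f A hA => hone' n i0 f A hA) k, integral_const_mul,
      integral_finsetSum _ (fun j _ => hkint _ _ (hXm n i0) (hXm n j))]
    calc _ ≤ (N : ℝ)⁻¹ * ∑ j : Fin N, a n := by
          gcongr with j _
          exact hle n i0 j
      _ = a n := by
          simp only [Finset.sum_const, Finset.card_univ, Fintype.card_fin, nsmul_eq_mul]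
          field_simp
  have hsmall : ∀ (x y : ℕ → S), Summable (fun n => k (x n, y n)) →
      (fun n => k (x n, y n)) =ᶠ[atTop] fun n => dist (x n) (y n) := by
    intro x y h
    filter_upwards [h.tendsto_atTop_zero.eventually (gt_mem_nhds one_pos)] with n hn
    rw [hk] at hn ⊢
    exact min_eq_left (by
      by_contra hc
      rw [min_eq_right (not_le.1 hc).le] at hn
      exact lt_irrefl _ hn)
  have hconv : ∀ᵐ ω ∂P, ∃ l, Tendsto (fun n => X n i0 ω) atTop (𝓝 l) := by
    filter_upwards [hB] with ω hω
    refine cauchySeq_tendsto_of_complete (cauchySeq_of_summable_dist ?_)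
    have he := hsmall (fun n => X n i0 ω) (fun n => X (n+1) i0 ω) hω
    exact (summable_congr_atTop he).1 hω
  obtain ⟨γ, hγm, hγ⟩ := measurable_limit_of_tendsto_metrizable_ae
    (fun n => (hXm n i0).aemeasurable) hconv
  refine ⟨γ, hγm, ?_, ?_⟩
  · filter_upwards [hγ, ae_all_iff.2 hA] with ω h1 h2 f
    rw [← tendsto_add_atTop_iff_nat 1]
    simp_rw [hemp, emp_integral]
    have hj : ∀ j, Tendsto (fun n => X n j ω) atTop (𝓝 (γ ω)) := by
      intro j
      have he := hsmall _ _ (h2 j)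
      exact h1.congr_dist ((h2 j).tendsto_atTop_zero.congr' he)
    have := Tendsto.const_mul (N : ℝ)⁻¹ (tendsto_finsetSum (Finset.univ : Finset (Fin N))
      fun j _ => (f.continuous.tendsto _).comp (hj j))
    have e : (N : ℝ)⁻¹ * ∑ j : Fin N, f (γ ω) = f (γ ω) := by
      simp only [Finset.sum_const, Finset.card_univ, Fintype.card_fin, nsmul_eq_mul]
      field_simp
    rw [e] at this
    exact this
  · intro f
    have l1 : Tendsto (fun n => ∫ ω, f (X n i0 ω) ∂P) atTop (𝓝 (∫ ω, f (γ ω) ∂P)) := by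
      refine tendsto_integral_of_dominated_convergence (fun _ => ‖f‖)
        (fun n => (hint n i0 f).aestronglyMeasurable)
        (integrable_const _) (fun n => ae_of_all _ fun ω => f.norm_coe_le_norm _) ?_
      filter_upwards [hγ] with ω h1
      exact (f.continuous.tendsto _).comp h1
    simp_rw [hmean] at l1
    exact tendsto_nhds_unique l1 tendsto_const_nhds
end

section
/- An almost surely convergent time-homogeneous Feller Markov chain converges to an absorbing state: Let S be a Polish space and κ a Markov transition kernel on S that is Feller, i.e., the map x ↦ ∫ f(y) κ(x, dy) is continuous for every bounded continuous f : S → ℝ. Let (X_n)_{n≥0} be an S-valued stochastic process adapted to a filtration (F_n) such that P(X_{n+1} ∈ A | F_n) = κ(X_n, A) almost surely for every Borel set A ⊆ S and every n ≥ 0. If X_n converges almost surely to an S-valued random variable X_∞, then almost surely κ(X_∞, ·) = δ_{X_∞}, i.e., X_∞ is an absorbing state of the chain. -/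
open MeasureTheory ProbabilityTheory Filter Topology BoundedContinuousFunction

lemma aux_joint
    {S : Type*} [MeasurableSpace S]
    {Ω : Type*} {m mΩ : MeasurableSpace Ω} (P : Measure Ω) [IsProbabilityMeasure P]
    (κ : Kernel S S) [IsMarkovKernel κ]
    (hm : m ≤ mΩ) (X Y : Ω → S)
    (hX : Measurable[m] X) (hY : Measurable Y)
    (h : ∀ (A : Set S), MeasurableSet A →
      P[fun ω => Set.indicator A (fun _ => (1 : ℝ)) (Y ω)|m]
        =ᵐ[P] fun ω => (κ (X ω) A).toReal) :
    P.map (fun ω => (X ω, Y ω)) = (P.map X) ⊗ₘ κ := by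
  have hX' : Measurable X := hX.mono hm le_rfl
  have : IsProbabilityMeasure (P.map X) := Measure.isProbabilityMeasure_map hX'.aemeasurable
  have : IsProbabilityMeasure (P.map (fun ω => (X ω, Y ω))) :=
    Measure.isProbabilityMeasure_map (hX'.prodMk hY).aemeasurable
  refine Measure.ext_prod fun {B A} hB hA => ?_
  rw [Measure.compProd_apply_prod hB hA, Measure.map_apply (hX'.prodMk hY) (hB.prod hA),
    setLIntegral_map hB (κ.measurable_coe hA) hX']
  have hInt : Integrable (fun ω => Set.indicator A (fun _ => (1 : ℝ)) (Y ω)) P := by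
    have : (fun ω => Set.indicator A (fun _ => (1 : ℝ)) (Y ω))
        = Set.indicator (Y ⁻¹' A) (fun _ => (1:ℝ)) := rfl
    rw [this]
    exact (integrable_const 1).indicator (hY hA)
  have h1 := setIntegral_condExp (μ := P) hm hInt (s := X ⁻¹' B) (hX hB)
  have h2 : ∫ ω in X ⁻¹' B, Set.indicator A (fun _ => (1 : ℝ)) (Y ω) ∂P
      = P.real ((fun ω => (X ω, Y ω)) ⁻¹' (B ×ˢ A)) := by
    change ∫ ω in X ⁻¹' B, Set.indicator (Y ⁻¹' A) (fun _ => (1:ℝ)) ω ∂P = _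
    rw [setIntegral_indicator (hY hA)]
    simp
    rfl
  rw [h2, setIntegral_congr_ae (hm _ (hX hB)) ((h A hA).mono fun ω hω _ => hω)] at h1
  have h3 : ∫ ω in X ⁻¹' B, (κ (X ω) A).toReal ∂P
      = (∫⁻ ω in X ⁻¹' B, κ (X ω) A ∂P).toReal :=
    integral_toReal ((κ.measurable_coe hA).comp hX').aemeasurable
      (Eventually.of_forall fun ω => measure_lt_top _ _)
  rw [h3] at h1
  refine ((ENNReal.toReal_eq_toReal_iff' ?_ ?_).1 h1).symm
  · refine ((setLIntegral_le_lintegral _ _).trans_lt ?_).ne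
    refine (lintegral_mono (g := fun _ => 1) fun ω => prob_le_one).trans_lt ?_
    simp
  · exact measure_ne_top _ _

lemma aux_fun
    {S : Type*} [MeasurableSpace S] [TopologicalSpace S] [PolishSpace S] [BorelSpace S]
    {Ω : Type*} {mΩ : MeasurableSpace Ω} (P : Measure Ω) [IsProbabilityMeasure P]
    (κ : Kernel S S) [IsMarkovKernel κ]
    (hFeller : ∀ f : S →ᵇ ℝ, Continuous fun x => ∫ y, f y ∂(κ x))
    (X : ℕ → Ω → S) (hX : ∀ n, Measurable (X n))
    (hj : ∀ n, P.map (fun ω => (X n ω, X (n+1) ω)) = (P.map (X n)) ⊗ₘ κ)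
    (Xinf : Ω → S) (hXinf : Measurable Xinf)
    (hconv : ∀ᵐ ω ∂P, Tendsto (fun n => X n ω) atTop (𝓝 (Xinf ω))) (f : S →ᵇ ℝ) :
    ∀ᵐ ω ∂P, ∀ᵐ y ∂(κ (Xinf ω)), f y = f (Xinf ω) := by
  have hb : ∀ x y, (f y - f x)^2 ≤ (2 * ‖f‖)^2 := fun x y => by
    apply sq_le_sq'
    · have := abs_le.1 (f.norm_coe_le_norm x); have := abs_le.1 (f.norm_coe_le_norm y); linarith
    · have := abs_le.1 (f.norm_coe_le_norm x); have := abs_le.1 (f.norm_coe_le_norm y); linarith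
  have hfm : Measurable f := f.continuous.measurable
  have hi : ∀ x x', Integrable (fun y => (f y - f x)^2) (κ x') := fun x x' =>
    Integrable.of_bound (((hfm.sub_const _).pow_const 2).aestronglyMeasurable) ((2 * ‖f‖)^2)
      (Eventually.of_forall fun y => by
        rw [Real.norm_of_nonneg (sq_nonneg _)]; exact hb x y)
  set G : S → ℝ := fun x => ∫ y, (f y - f x)^2 ∂(κ x) with hG
  have hG0 : ∀ x, 0 ≤ G x := fun x => integral_nonneg fun y => sq_nonneg _
  have hGb : ∀ x, ‖G x‖ ≤ (2 * ‖f‖)^2 := fun x => by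
    rw [Real.norm_of_nonneg (hG0 x)]
    refine (integral_mono (hi x x) (integrable_const ((2 * ‖f‖)^2)) (hb x)).trans ?_
    simp
  have hGc : Continuous G := by
    have : G = fun x => (∫ y, (f * f) y ∂(κ x)) - 2 * f x * (∫ y, f y ∂(κ x)) + f x ^ 2 := by
      funext x
      have e : ∀ y, (f y - f x)^2 = (f * f) y - 2 * f x * f y + f x ^ 2 := fun y => by
        simp only [BoundedContinuousFunction.mul_apply]; ring
      simp only [hG, e]
      rw [integral_add, integral_sub, integral_const_mul]
      · simp
      · exact (f * f).integrable _
      · exact (f.integrable _).const_mul _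
      · exact ((f * f).integrable _).sub ((f.integrable _).const_mul _)
      · exact integrable_const _
    rw [this]
    exact ((hFeller (f * f)).sub ((continuous_const.mul f.continuous).mul (hFeller f))).add
      (f.continuous.pow 2)
  have hid : ∀ n, ∫ ω, (f (X (n+1) ω) - f (X n ω))^2 ∂P = ∫ ω, G (X n ω) ∂P := fun n => by
    have : IsProbabilityMeasure (P.map (X n)) :=
      Measure.isProbabilityMeasure_map (hX n).aemeasurable
    have hm2 : Measurable fun p : S × S => (f p.2 - f p.1)^2 :=
      ((hfm.comp measurable_snd).sub (hfm.comp measurable_fst)).pow_const 2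
    have h1 : ∫ p, (f p.2 - f p.1)^2 ∂(P.map (fun ω => (X n ω, X (n+1) ω)))
        = ∫ ω, (f (X (n+1) ω) - f (X n ω))^2 ∂P :=
      integral_map ((hX n).prodMk (hX (n+1))).aemeasurable hm2.aestronglyMeasurable
    have h2 : ∫ x, G x ∂(P.map (X n)) = ∫ ω, G (X n ω) ∂P :=
      integral_map (hX n).aemeasurable hGc.measurable.aestronglyMeasurable
    rw [← h1, ← h2, hj n, Measure.integral_compProd]
    exact Integrable.of_bound hm2.aestronglyMeasurable ((2 * ‖f‖)^2)
      (Eventually.of_forall fun p => by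
        rw [Real.norm_of_nonneg (sq_nonneg _)]; exact hb p.1 p.2)
  have hL : Tendsto (fun n => ∫ ω, (f (X (n+1) ω) - f (X n ω))^2 ∂P) atTop
      (𝓝 (∫ _, (0:ℝ) ∂P)) := by
    refine tendsto_integral_of_dominated_convergence (fun _ => (2 * ‖f‖)^2) (fun n => ?_)
      (integrable_const _) (fun n => Eventually.of_forall fun ω => ?_) ?_
    · exact (((hfm.comp (hX (n+1))).sub (hfm.comp (hX n))).pow_const 2).aestronglyMeasurable
    · rw [Real.norm_of_nonneg (sq_nonneg _)]; exact hb _ _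
    · filter_upwards [hconv] with ω hω
      have h1 := (f.continuous.tendsto _).comp hω
      have h2 := h1.comp (tendsto_add_atTop_nat 1)
      simpa using (h2.sub h1).pow 2
  have hR : Tendsto (fun n => ∫ ω, G (X n ω) ∂P) atTop (𝓝 (∫ ω, G (Xinf ω) ∂P)) := by
    refine tendsto_integral_of_dominated_convergence (fun _ => (2 * ‖f‖)^2) (fun n => ?_)
      (integrable_const _) (fun n => Eventually.of_forall fun ω => hGb _) ?_
    · exact (hGc.measurable.comp (hX n)).aestronglyMeasurable
    · filter_upwards [hconv] with ω hω
      exact (hGc.tendsto _).comp hω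
  have h0 : ∫ ω, G (Xinf ω) ∂P = 0 := by
    simp only [hid] at hL
    simpa using tendsto_nhds_unique hR hL
  rw [integral_eq_zero_iff_of_nonneg (fun ω => hG0 _)
    (Integrable.of_bound (hGc.measurable.comp hXinf).aestronglyMeasurable _
      (Eventually.of_forall fun ω => hGb _))] at h0
  filter_upwards [h0] with ω hω
  have h3 : ∫ y, (f y - f (Xinf ω))^2 ∂(κ (Xinf ω)) = 0 := hω
  rw [integral_eq_zero_iff_of_nonneg (fun ω => sq_nonneg _) (hi _ _)] at h3
  filter_upwards [h3] with y hy
  have : (f y - f (Xinf ω))^2 = 0 := hy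
  exact sub_eq_zero.1 (pow_eq_zero_iff (two_ne_zero) |>.1 this)

/-- **An almost surely convergent time-homogeneous Feller Markov chain converges to an
absorbing state.**  Let `S` be a Polish space and `κ` a Feller Markov transition kernel on
`S`.  Let `(X_n)` be adapted to a filtration `(F_n)` with
`P(X_{n+1} ∈ A | F_n) = κ(X_n, A)` a.s. for every Borel `A`.  If `X_n → X_∞` almost surely,
then almost surely `κ(X_∞, ·) = δ_{X_∞}`, i.e. `X_∞` is an absorbing state. -/
theorem feller_chain_converges_to_absorbing_state
    {S : Type*} [MeasurableSpace S] [TopologicalSpace S] [PolishSpace S] [BorelSpace S]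
    {Ω : Type*} {mΩ : MeasurableSpace Ω} (P : Measure Ω) [IsProbabilityMeasure P]
    (κ : Kernel S S) [IsMarkovKernel κ]
    (hFeller : ∀ f : S →ᵇ ℝ, Continuous fun x => ∫ y, f y ∂(κ x))
    (F : Filtration ℕ mΩ)
    (X : ℕ → Ω → S)
    (hadapt : ∀ n, Measurable[F n] (X n))
    (hmarkov : ∀ (n : ℕ) (A : Set S), MeasurableSet A →
      P[fun ω => Set.indicator A (fun _ => (1 : ℝ)) (X (n + 1) ω)|F n]
        =ᵐ[P] fun ω => (κ (X n ω) A).toReal)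
    (Xinf : Ω → S) (hXinf : Measurable Xinf)
    (hconv : ∀ᵐ ω ∂P, Tendsto (fun n => X n ω) atTop (𝓝 (Xinf ω))) :
    ∀ᵐ ω ∂P, κ (Xinf ω) = Measure.dirac (Xinf ω) := by
  have hX : ∀ n, Measurable (X n) := fun n => (hadapt n).mono (F.le n) le_rfl
  have hj : ∀ n, P.map (fun ω => (X n ω, X (n+1) ω)) = (P.map (X n)) ⊗ₘ κ := fun n =>
    aux_joint P κ (F.le n) (X n) (X (n+1)) (hadapt n) (hX _) (hmarkov n)
  letI := TopologicalSpace.upgradeIsCompletelyMetrizable S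
  obtain ⟨D, hDc, hD⟩ := TopologicalSpace.exists_countable_dense S
  have : Countable D := hDc.to_subtype
  let f : D → S →ᵇ ℝ := fun q => BoundedContinuousFunction.ofNormedAddCommGroup
    (fun y => min 1 (dist y q)) (by fun_prop) 1 (fun y => by
      rw [Real.norm_of_nonneg (le_min zero_le_one dist_nonneg)]; exact min_le_left _ _)
  have key := ae_all_iff.2 fun q : D =>
    aux_fun P κ hFeller X hX hj Xinf hXinf hconv (f q)
  filter_upwards [key] with ω hω
  have h1 : ∀ᵐ y ∂(κ (Xinf ω)), y = Xinf ω := by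
    filter_upwards [ae_all_iff.2 hω] with y hy
    have hc : (fun z => min 1 (dist y z)) = fun z => min 1 (dist (Xinf ω) z) := by
      refine Continuous.ext_on hD (by fun_prop) (by fun_prop) fun z hz => ?_
      exact hy ⟨z, hz⟩
    have := congrFun hc (Xinf ω)
    simp only [dist_self] at this
    have h0 : dist y (Xinf ω) = 0 := by
      by_contra hne
      have : 0 < min 1 (dist y (Xinf ω)) :=
        lt_min one_pos (lt_of_le_of_ne dist_nonneg (Ne.symm hne))
      simp_all
    exact dist_eq_zero.1 h0
  have h2 : Measure.map id (κ (Xinf ω)) = Measure.map (fun _ => Xinf ω) (κ (Xinf ω)) :=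
    Measure.map_congr h1
  rw [Measure.map_id, Measure.map_const] at h2
  simpa using h2
end

section
/- Hwang's theorem on concentration of Gibbs measures at global minima: Let V : ℝ^d → ℝ be twice continuously differentiable, attaining its global minimum value V* exactly at finitely many points m_1,…,m_ℓ, at each of which the Hessian ∇²V(m_k) is positive definite (in particular nonsingular). Assume lim inf_{|x|→∞} V(x) > V* and that ∫_{ℝ^d} e^{−V(x)/a₀} dx < ∞ for some a₀ > 0. For a ∈ (0, a₀], let π_a be the probability measure on ℝ^d with density proportional to e^{−V(x)/a}. Then, as a ↓ 0, π_a converges weakly to Σ_{k=1}^ℓ w_k δ_{m_k}, where the weight at m_k is w_k = (det ∇²V(m_k))^{−1/2} / Σ_{j=1}^ℓ (det ∇²V(m_j))^{−1/2}; in particular, the asymptotic probability mass at the global minimum m_k is proportional to (∏_{j=1}^d Λ_j^k)^{−1/2}, where Λ_1^k,…,Λ_d^k > 0 are the eigenvalues of ∇²V(m_k). -/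
open MeasureTheory Filter Topology BoundedContinuousFunction Real

/-- The Hessian matrix of `V : ℝ^d → ℝ` at a point `m`, i.e. the matrix of the second
derivative bilinear form in the standard basis. -/
noncomputable def hessianMatrix {d : ℕ} (V : EuclideanSpace ℝ (Fin d) → ℝ)
    (m : EuclideanSpace ℝ (Fin d)) : Matrix (Fin d) (Fin d) ℝ :=
  fun i j => fderiv ℝ (fderiv ℝ V) m (EuclideanSpace.single i 1) (EuclideanSpace.single j 1)

open scoped MatrixOrder in
lemma posDef_factor {d : ℕ} {A : Matrix (Fin d) (Fin d) ℝ} (hA : A.PosDef) :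
    ∃ B : Matrix (Fin d) (Fin d) ℝ, A = B.transpose * B := by
  obtain ⟨B, hB⟩ := CStarAlgebra.nonneg_iff_eq_star_mul_self.1 hA.posSemidef.nonneg
  exact ⟨B, by simpa [Matrix.star_eq_conjTranspose] using hB⟩

/-- the quadratic form of the Hessian is a norm square of a linear automorphism -/
lemma hess_factor {d : ℕ} (H : EuclideanSpace ℝ (Fin d) →L[ℝ] EuclideanSpace ℝ (Fin d) →L[ℝ] ℝ)
    (A : Matrix (Fin d) (Fin d) ℝ)
    (hHA : ∀ i j, A i j = H (EuclideanSpace.single i 1) (EuclideanSpace.single j 1))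
    (hA : A.PosDef) :
    ∃ L : EuclideanSpace ℝ (Fin d) ≃L[ℝ] EuclideanSpace ℝ (Fin d),
      (∀ y, H y y = ‖L y‖ ^ 2) ∧
      |(L : EuclideanSpace ℝ (Fin d) →ₗ[ℝ] EuclideanSpace ℝ (Fin d)).det| = Real.sqrt A.det := by
  obtain ⟨B, hB⟩ := posDef_factor hA
  have hdet : A.det = B.det ^ 2 := by rw [hB, Matrix.det_mul, Matrix.det_transpose]; ring
  have hBdet : B.det ≠ 0 := by
    intro h; have := hA.det_pos; rw [hdet, h] at this; simp at this
  have hl : IsUnit (LinearMap.det (B.toLpLin 2 2)) := by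
    rw [LinearMap.det_toLpLin]; exact isUnit_iff_ne_zero.2 hBdet
  refine ⟨(LinearEquiv.ofIsUnitDet (f := B.toLpLin 2 2)
    (v := (EuclideanSpace.basisFun (Fin d) ℝ).toBasis) (v' := (EuclideanSpace.basisFun (Fin d) ℝ).toBasis) (by
      rwa [LinearMap.det_toMatrix])).toContinuousLinearEquiv, ?_, ?_⟩
  · intro y
    have hy : y = ∑ i, y i • EuclideanSpace.single i (1:ℝ) := by
      conv_lhs => rw [← (EuclideanSpace.basisFun (Fin d) ℝ).sum_repr y]
      simp
    have h1 : H y y = ∑ i, ∑ j, y i * (y j * A i j) := by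
      conv_lhs => rw [hy]
      simp only [map_sum, map_smul, _root_.sum_apply, _root_.smul_apply,
        smul_eq_mul, ← hHA, Finset.mul_sum]
      rw [Finset.sum_comm]
      refine Finset.sum_congr rfl fun i _ => Finset.sum_congr rfl fun j _ => by ring
    have h2 : ‖B.toLpLin 2 2 y‖ ^ 2 = y.ofLp ⬝ᵥ (A.mulVec y.ofLp) := by
      rw [hB, ← Matrix.mulVec_mulVec, Matrix.dotProduct_mulVec, Matrix.vecMul_transpose,
        EuclideanSpace.real_norm_sq_eq]
      simp [dotProduct, Matrix.toLpLin_apply, sq]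
    change _ = ‖B.toLpLin 2 2 y‖ ^ 2
    rw [h1, h2]
    simp only [dotProduct, Matrix.mulVec, Finset.mul_sum]
    refine Finset.sum_congr rfl fun i _ => Finset.sum_congr rfl fun j _ => by ring
  · rw [hdet, Real.sqrt_sq_eq_abs, ← LinearMap.det_toLpLin 2 B]
    congr 1

lemma integrable_gauss {d : ℕ} {b : ℝ} (hb : 0 < b) :
    Integrable (fun y : EuclideanSpace ℝ (Fin d) => Real.exp (-b * ‖y‖ ^ 2)) := by
  apply Integrable.of_integral_ne_zero
  rw [GaussianFourier.integral_rexp_neg_mul_sq_norm hb]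
  positivity

lemma gauss_comp {d : ℕ} (L : EuclideanSpace ℝ (Fin d) ≃L[ℝ] EuclideanSpace ℝ (Fin d)) :
    ∫ y, Real.exp (-(1/2) * ‖L y‖ ^ 2) =
     |(L : EuclideanSpace ℝ (Fin d) →ₗ[ℝ] EuclideanSpace ℝ (Fin d)).det|⁻¹ *
      ∫ y : EuclideanSpace ℝ (Fin d), Real.exp (-(1/2) * ‖y‖ ^ 2) := by
  have h := integral_map_equiv (μ := (volume : Measure (EuclideanSpace ℝ (Fin d))))
    L.toHomeomorph.toMeasurableEquiv (fun y => Real.exp (-(1/2) * ‖y‖ ^ 2))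
  have h2 := Measure.map_linearMap_addHaar_eq_smul_addHaar
    (volume : Measure (EuclideanSpace ℝ (Fin d)))
    (f := (L : EuclideanSpace ℝ (Fin d) →ₗ[ℝ] EuclideanSpace ℝ (Fin d)))
    (LinearEquiv.isUnit_det' L.toLinearEquiv).ne_zero
  change ∫ y, Real.exp (-(1/2) * ‖y‖ ^ 2) ∂(Measure.map L volume) = ∫ y, Real.exp (-(1/2) * ‖L y‖ ^ 2) at h
  change Measure.map L volume = _ at h2
  rw [← h, h2, integral_smul_measure, ENNReal.toReal_ofReal (abs_nonneg _), abs_inv, smul_eq_mul]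

/-- second order Taylor at a critical point -/
lemma taylor_two {E : Type*} [NormedAddCommGroup E] [NormedSpace ℝ E] (V : E → ℝ)
    (hV : ContDiff ℝ 2 V) (m : E) (hm : fderiv ℝ V m = 0) {ε : ℝ} (hε : 0 < ε) :
    ∃ r > 0, ∀ y : E, ‖y‖ < r →
      |V (m + y) - V m - (1/2) * fderiv ℝ (fderiv ℝ V) m y y| ≤ ε * ‖y‖ ^ 2 := by
  have hd : ContDiff ℝ 1 (fderiv ℝ V) := hV.fderiv_right (by norm_num)
  have hsymm : IsSymmSndFDerivAt ℝ V m := hV.contDiffAt.isSymmSndFDerivAt (by simp)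
  have hf : HasFDerivAt (fderiv ℝ V) (fderiv ℝ (fderiv ℝ V) m) m :=
    (hd.differentiable (by norm_num) m).hasFDerivAt
  rw [hasFDerivAt_iff_isLittleO_nhds_zero] at hf
  have h2 := hf.def hε
  obtain ⟨r, hr, h3⟩ := Metric.eventually_nhds_iff.1 h2
  refine ⟨r, hr, fun y hy => ?_⟩
  set H := fderiv ℝ (fderiv ℝ V) m with hH
  have key := (convex_closedBall (0:E) ‖y‖).norm_image_sub_le_of_norm_hasFDerivWithin_le
    (f := fun z => V (m + z) - (1/2) * H z z)
    (f' := fun z => fderiv ℝ V (m + z) - H z) (C := ε * ‖y‖) (x := 0) (y := y) ?_ ?_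
    (by simp) (by simp)
  · simp only [add_zero, map_zero, mul_zero, sub_zero, Real.norm_eq_abs] at key
    calc _ = _ := by congr 1; ring
      _ ≤ _ := key
      _ = _ := by ring
  · intro z _
    apply HasFDerivAt.hasFDerivWithinAt
    have e1 : HasFDerivAt (fun z => V (m + z)) (fderiv ℝ V (m + z)) z := by
      have := (hV.differentiable (by norm_num) (m + z)).hasFDerivAt
      simpa [Function.comp_def] using this.comp z ((hasFDerivAt_id z).const_add m)
    have e2 : HasFDerivAt (fun z => H z z) _ z := H.hasFDerivAt.clm_apply (hasFDerivAt_id z)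
    refine (e1.sub (e2.const_mul (1/2))).congr_fderiv ?_
    ext w
    have := hsymm w z
    simp [← hH] at this ⊢
    rw [this]; ring
  · intro z hz
    have hz' : ‖z‖ ≤ ‖y‖ := by simpa using hz
    have := h3 (y := z) (by simpa using hz'.trans_lt hy)
    rw [hm, sub_zero] at this
    exact this.trans (by gcongr)

lemma local_laplace {d : ℕ} (V : EuclideanSpace ℝ (Fin d) → ℝ) (hV : ContDiff ℝ 2 V)
    (m : EuclideanSpace ℝ (Fin d)) (hmin : ∀ x, V m ≤ V x) (hpos : (hessianMatrix V m).PosDef) :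
    ∃ r₀ > 0, ∀ r, 0 < r → r ≤ r₀ → ∀ f : EuclideanSpace ℝ (Fin d) → ℝ, Continuous f →
      ∀ M, (∀ x, |f x| ≤ M) →
      Tendsto (fun a : ℝ => (√a ^ d)⁻¹ * ∫ x in Metric.ball m r, f x * Real.exp (-(V x - V m) / a))
        (𝓝[>] 0) (𝓝 ((∫ y : EuclideanSpace ℝ (Fin d), Real.exp (-(1/2) * ‖y‖ ^ 2)) *
          ((Real.sqrt (hessianMatrix V m).det)⁻¹ * f m))) := by
  have hcrit : fderiv ℝ V m = 0 := IsLocalMin.fderiv_eq_zero (Eventually.of_forall hmin)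
  obtain ⟨L, hL, hdet⟩ := hess_factor (fderiv ℝ (fderiv ℝ V) m) (hessianMatrix V m)
    (fun i j => rfl) hpos
  set K : ℝ := ‖(L.symm : EuclideanSpace ℝ (Fin d) →L[ℝ] EuclideanSpace ℝ (Fin d))‖ + 1 with hK
  have hK0 : 0 < K := by positivity
  have hLK : ∀ y, ‖y‖ ≤ K * ‖L y‖ := fun y => by
    have := (L.symm : EuclideanSpace ℝ (Fin d) →L[ℝ] EuclideanSpace ℝ (Fin d)).le_opNorm (L y)
    simp at this
    refine this.trans ?_
    gcongr
    linarith
  set κ : ℝ := (K ^ 2)⁻¹ with hκ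
  have hκ0 : 0 < κ := by positivity
  have hLκ : ∀ y, κ * ‖y‖ ^ 2 ≤ ‖L y‖ ^ 2 := fun y => by
    have h := pow_le_pow_left₀ (norm_nonneg _) (hLK y) 2
    rw [mul_pow] at h
    rw [hκ, inv_mul_le_iff₀ (by positivity)]
    exact h
  obtain ⟨r₀, hr₀, hT⟩ := taylor_two V hV m hcrit (ε := κ / 4) (by positivity)
  refine ⟨r₀, hr₀, fun r hr hrr f hf M hM => ?_⟩
  have hM0 : 0 ≤ M := (abs_nonneg _).trans (hM m)
  have hlim : (∫ y : EuclideanSpace ℝ (Fin d), Real.exp (-(1/2) * ‖y‖ ^ 2)) *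
          ((Real.sqrt (hessianMatrix V m).det)⁻¹ * f m)
      = ∫ y, f m * Real.exp (-(1/2) * ‖L y‖ ^ 2) := by
    rw [integral_const_mul, gauss_comp, hdet]; ring
  rw [hlim]
  let F : ℝ → EuclideanSpace ℝ (Fin d) → ℝ := fun a y =>
    (Metric.ball m r).indicator (fun x => f x * Real.exp (-(V x - V m) / a)) (m + y)
  have hF : ∀ a : ℝ, (√a ^ d)⁻¹ * ∫ x in Metric.ball m r, f x * Real.exp (-(V x - V m) / a)
      = ∫ y, F a (√a • y) := by
    intro a
    rw [Measure.integral_comp_smul_of_nonneg volume (F a) (√a) (hR := Real.sqrt_nonneg a)]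
    rw [← integral_indicator Metric.isOpen_ball.measurableSet, smul_eq_mul]
    congr 1
    · simp
    · exact (integral_add_left_eq_self _ m).symm
  simp_rw [hF]
  have hVc : Continuous V := hV.continuous
  apply tendsto_integral_filter_of_dominated_convergence
    (fun y => M * Real.exp (-(κ/4) * ‖y‖ ^ 2))
  · refine Eventually.of_forall fun a => ?_
    have hFm : Measurable (F a) := by
      have h1 : Measurable ((Metric.ball m r).indicator
          (fun x => f x * Real.exp (-(V x - V m) / a))) :=
        (by fun_prop : Continuous (fun x => f x * Real.exp (-(V x - V m) / a))).measurable.indicator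
          Metric.isOpen_ball.measurableSet
      exact h1.comp (measurable_const_add m)
    exact (hFm.comp (measurable_const_smul (√a))).aestronglyMeasurable
  · filter_upwards [self_mem_nhdsWithin] with a ha
    have ha : 0 < a := ha
    refine Eventually.of_forall fun y => ?_
    simp only [F, Set.indicator]
    split_ifs with hmem
    · rw [norm_mul, Real.norm_eq_abs, Real.norm_eq_abs, Real.abs_exp]
      have hn : ‖√a • y‖ < r₀ := by
        have : ‖√a • y‖ < r := by simpa using hmem
        linarith
      have h1 := hT _ hn
      rw [hL, map_smul, norm_smul, norm_smul, mul_pow, mul_pow, Real.norm_eq_abs, sq_abs,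
        Real.sq_sqrt ha.le] at h1
      have h2 := (abs_le.1 h1).1
      have h3 := hLκ y
      gcongr
      · exact hM _
      · rw [div_le_iff₀ ha]
        have : a * (κ * ‖y‖ ^ 2) ≤ a * ‖L y‖ ^ 2 := by gcongr
        nlinarith
    · simp only [norm_zero]; positivity
  · exact (integrable_gauss (by positivity)).const_mul M
  · refine Eventually.of_forall fun y => ?_
    have hsq : Tendsto (fun a : ℝ => m + √a • y) (𝓝[>] 0) (𝓝 m) := by
      have : Continuous (fun a : ℝ => m + √a • y) := by fun_prop
      have := this.tendsto 0
      simp only [Real.sqrt_zero, zero_smul, add_zero] at this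
      exact this.mono_left nhdsWithin_le_nhds
    have hev : ∀ r > 0, ∀ᶠ a : ℝ in 𝓝[>] 0, ‖√a • y‖ < r := fun r hr => by
      filter_upwards [hsq (Metric.ball_mem_nhds m hr)] with a ha
      simpa using ha
    have hq : Tendsto (fun a : ℝ => -(V (m + √a • y) - V m) / a) (𝓝[>] 0)
        (𝓝 (-(1/2) * ‖L y‖ ^ 2)) := by
      rw [Metric.tendsto_nhds]
      intro ε hε
      obtain ⟨r₁, hr₁, hT₁⟩ := taylor_two V hV m hcrit (ε := ε / (‖y‖ ^ 2 + 1)) (by positivity)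
      filter_upwards [hev r₁ hr₁, self_mem_nhdsWithin] with a ha1 ha
      have ha : 0 < a := ha
      have h1 := hT₁ _ ha1
      rw [hL, map_smul, norm_smul, norm_smul, mul_pow, mul_pow, Real.norm_eq_abs, sq_abs,
        Real.sq_sqrt ha.le] at h1
      rw [Real.dist_eq]
      have e : -(V (m + √a • y) - V m) / a - -(1/2) * ‖L y‖ ^ 2
        = -((V (m + √a • y) - V m - 1/2 * (a * ‖L y‖ ^ 2)) / a) := by field_simp; ring
      rw [e, abs_neg, abs_div, abs_of_pos ha, div_lt_iff₀ ha]
      refine h1.trans_lt ?_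
      have : ε / (‖y‖ ^ 2 + 1) * ‖y‖ ^ 2 < ε := by
        rw [div_mul_eq_mul_div, div_lt_iff₀ (by positivity)]
        nlinarith
      nlinarith
    have hmain := ((hf.tendsto m).comp hsq).mul ((Real.continuous_exp.tendsto _).comp hq)
    refine hmain.congr' ?_
    filter_upwards [hev r hr] with a ha
    simp only [F]
    rw [Set.indicator_of_mem (by simpa using ha)]
    rfl

lemma tendsto_small (d : ℕ) {δ : ℝ} (hδ : 0 < δ) :
    Tendsto (fun a : ℝ => (√a ^ d)⁻¹ * Real.exp (-δ * a⁻¹)) (𝓝[>] 0) (𝓝 0) := by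
  have h := (tendsto_rpow_mul_exp_neg_mul_atTop_nhds_zero ((d:ℝ)/2) δ hδ).comp
    (tendsto_inv_nhdsGT_zero (𝕜 := ℝ))
  refine h.congr' ?_
  filter_upwards [self_mem_nhdsWithin] with a ha
  have ha : 0 < a := ha
  simp only [Function.comp]
  congr 1
  rw [← inv_pow, ← Real.sqrt_inv, Real.sqrt_eq_rpow, ← Real.rpow_natCast, ← Real.rpow_mul (by positivity)]
  congr 1; ring

lemma global_laplace
    {d : ℕ} (V : EuclideanSpace ℝ (Fin d) → ℝ) (hV : ContDiff ℝ 2 V)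
    (ℓ : ℕ) (m : Fin ℓ → EuclideanSpace ℝ (Fin d))
    (hm_inj : Function.Injective m)
    (Vstar : ℝ) (hmin : ∀ x, Vstar ≤ V x) (hval : ∀ k, V (m k) = Vstar)
    (hexact : ∀ x, V x = Vstar → ∃ k, x = m k)
    (hposdef : ∀ k, (hessianMatrix V (m k)).PosDef)
    (hliminf : ∃ c : ℝ, Vstar < c ∧
      ∀ᶠ x in cocompact (EuclideanSpace ℝ (Fin d)), c ≤ V x)
    (a₀ : ℝ) (ha₀ : 0 < a₀)
    (hint : Integrable (fun x => Real.exp (-V x / a₀)) volume)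
    (f : EuclideanSpace ℝ (Fin d) → ℝ) (hf : Continuous f) (M : ℝ) (hM : ∀ x, |f x| ≤ M) :
    Tendsto (fun a : ℝ => (√a ^ d)⁻¹ * ∫ x, f x * Real.exp (-(V x - Vstar) / a))
        (𝓝[>] 0) (𝓝 ((∫ y : EuclideanSpace ℝ (Fin d), Real.exp (-(1/2) * ‖y‖ ^ 2)) *
          ∑ k, ((Real.sqrt (hessianMatrix V (m k)).det)⁻¹ * f (m k)))) := by
  have hVc : Continuous V := hV.continuous
  choose r₀ hr₀ hloc using fun k => local_laplace V hV (m k)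
    (fun x => by rw [hval]; exact hmin x) (hposdef k)
  obtain ⟨r, hr, hrr, hdis⟩ : ∃ r > 0, (∀ k, r ≤ r₀ k) ∧
      ∀ i j, i ≠ j → r + r ≤ dist (m i) (m j) := by
    have h1 : ∀ᶠ r : ℝ in 𝓝[>] 0, ∀ k, r ≤ r₀ k := eventually_all.2 fun k =>
      (eventually_le_nhds (hr₀ k)).filter_mono nhdsWithin_le_nhds
    have h2 : ∀ᶠ r : ℝ in 𝓝[>] 0, ∀ i j, i ≠ j → r + r ≤ dist (m i) (m j) :=
      eventually_all.2 fun i => eventually_all.2 fun j => by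
        by_cases hij : i = j
        · simp [hij]
        · have : 0 < dist (m i) (m j) / 2 := half_pos (dist_pos.2 (hm_inj.ne hij))
          filter_upwards [(eventually_le_nhds this).filter_mono nhdsWithin_le_nhds] with r hr _
          linarith
    obtain ⟨r, ⟨h1, h2⟩, h3⟩ := ((h1.and h2).and self_mem_nhdsWithin).exists
    exact ⟨r, h3, h1, h2⟩
  set U : Set (EuclideanSpace ℝ (Fin d)) := ⋃ k, Metric.ball (m k) r with hU
  have hUo : IsOpen U := isOpen_iUnion fun k => Metric.isOpen_ball
  obtain ⟨δ, hδ, hout⟩ : ∃ δ > 0, ∀ x ∈ Uᶜ, δ ≤ V x - Vstar := by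
    obtain ⟨c, hc, hcV⟩ := hliminf
    obtain ⟨K, hK, hKc⟩ := mem_cocompact.1 hcV
    obtain ⟨b, hb, hbV⟩ := (hK.diff hUo).exists_forall_le' (f := V) hVc.continuousOn (a := Vstar)
      (fun x hx => lt_of_le_of_ne (hmin x) fun h => hx.2 (by
        obtain ⟨k, rfl⟩ := hexact x h.symm
        exact Set.mem_iUnion.2 ⟨k, Metric.mem_ball_self hr⟩))
    refine ⟨min (b - Vstar) (c - Vstar), lt_min (by linarith) (by linarith), fun x hx => ?_⟩
    by_cases hxK : x ∈ K
    · exact (min_le_left _ _).trans (by linarith [hbV x ⟨hxK, hx⟩])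
    · have : c ≤ V x := hKc hxK
      exact (min_le_right _ _).trans (by linarith)
  have hM0 : 0 ≤ M := (abs_nonneg _).trans (hM 0)
  have hint' : Integrable (fun x => Real.exp (-(V x - Vstar) / a₀)) volume := by
    refine (hint.mul_const (Real.exp (Vstar / a₀))).congr (Eventually.of_forall fun x => ?_)
    simp only [← Real.exp_add]
    congr 1; ring
  set I := ∫ x, Real.exp (-(V x - Vstar) / a₀) with hI
  have hsmall : ∀ᶠ a : ℝ in 𝓝[>] 0, 0 < a ∧ a ≤ a₀ :=
    (eventually_mem_nhdsWithin (s := Set.Ioi (0:ℝ))).and ((eventually_le_nhds ha₀).filter_mono nhdsWithin_le_nhds)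
  have hintf : ∀ a, 0 < a → a ≤ a₀ →
      Integrable (fun x => f x * Real.exp (-(V x - Vstar) / a)) volume := by
    intro a ha haa
    refine (hint'.const_mul M).mono'
      (by fun_prop : Continuous (fun x => f x * Real.exp (-(V x - Vstar) / a))).aestronglyMeasurable
      (Eventually.of_forall fun x => ?_)
    rw [norm_mul, Real.norm_eq_abs, Real.norm_eq_abs, Real.abs_exp]
    have h0 := hmin x
    refine mul_le_mul (hM x) (Real.exp_le_exp.2 ?_) (Real.exp_pos _).le hM0
    · rw [neg_div, neg_div, neg_le_neg_iff]
      exact div_le_div_of_nonneg_left (by linarith) ha haa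
  have hO : Tendsto (fun a : ℝ => (√a ^ d)⁻¹ * ∫ x in Uᶜ, f x * Real.exp (-(V x - Vstar) / a))
      (𝓝[>] 0) (𝓝 0) := by
    have hs := (tendsto_small d hδ).mul_const (M * Real.exp (δ / a₀) * I)
    rw [zero_mul] at hs
    refine squeeze_zero_norm' ?_ hs
    filter_upwards [hsmall] with a ha
    obtain ⟨ha, haa⟩ := ha
    rw [norm_mul, Real.norm_of_nonneg (by positivity : 0 ≤ (√a ^ d)⁻¹), mul_assoc]
    gcongr
    have hae : 0 ≤ a⁻¹ - a₀⁻¹ := sub_nonneg.2 (inv_anti₀ ha haa)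
    calc ‖∫ x in Uᶜ, f x * Real.exp (-(V x - Vstar) / a)‖
        ≤ ∫ x in Uᶜ, M * Real.exp (δ / a₀) * Real.exp (-δ * a⁻¹) *
            Real.exp (-(V x - Vstar) / a₀) := by
          refine norm_integral_le_of_norm_le (hint'.const_mul _).integrableOn ?_
          refine (ae_restrict_mem hUo.measurableSet.compl).mono fun x hx => ?_
          rw [norm_mul, Real.norm_eq_abs, Real.norm_eq_abs, Real.abs_exp, mul_assoc, mul_assoc,
            ← Real.exp_add, ← Real.exp_add]
          gcongr
          · exact hM x
          · have := mul_le_mul_of_nonneg_right (hout x hx) hae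
            simp only [div_eq_mul_inv]
            linarith
      _ ≤ ∫ x, M * Real.exp (δ / a₀) * Real.exp (-δ * a⁻¹) *
            Real.exp (-(V x - Vstar) / a₀) :=
          setIntegral_le_integral (hint'.const_mul _) (Eventually.of_forall fun x => by
            simp only [Pi.zero_apply]; positivity)
      _ = _ := by rw [integral_const_mul]; ring
  have hB : ∀ k, Tendsto (fun a : ℝ => (√a ^ d)⁻¹ *
      ∫ x in Metric.ball (m k) r, f x * Real.exp (-(V x - Vstar) / a)) (𝓝[>] 0) _ := fun k => by
    have := hloc k r hr (hrr k) f hf M hM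
    rw [hval] at this
    exact this
  have htot := (tendsto_finsetSum Finset.univ fun k _ => hB k).add hO
  rw [add_zero, ← Finset.mul_sum] at htot
  refine htot.congr' ?_
  filter_upwards [hsmall] with a ha
  have hi := hintf a ha.1 ha.2
  rw [← Finset.mul_sum, ← mul_add, ← integral_add_compl hUo.measurableSet hi,
    hU, integral_iUnion_fintype (fun k => Metric.isOpen_ball.measurableSet)
      (fun i j hij => Metric.ball_disjoint_ball (hdis i j hij)) (fun k => hi.integrableOn)]

/-- **Hwang's theorem on concentration of Gibbs measures at global minima.**
Let `V : ℝ^d → ℝ` be `C²`, attaining its global minimum value `V*` exactly at the finitely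
many points `m_1, …, m_ℓ`, at each of which the Hessian is positive definite.  Assume
`liminf_{|x|→∞} V(x) > V*` and `∫ e^{−V/a₀} dx < ∞` for some `a₀ > 0`.  Let `π_a` be the
Gibbs probability measure with density proportional to `e^{−V(x)/a}`.  Then as `a ↓ 0`,
`π_a` converges weakly to `∑_k w_k δ_{m_k}` with
`w_k = (det ∇²V(m_k))^{−1/2} / ∑_j (det ∇²V(m_j))^{−1/2}`. -/
theorem hwang_gibbs_concentration
    {d : ℕ} (V : EuclideanSpace ℝ (Fin d) → ℝ) (hV : ContDiff ℝ 2 V)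
    (ℓ : ℕ) (hℓ : 1 ≤ ℓ) (m : Fin ℓ → EuclideanSpace ℝ (Fin d))
    (hm_inj : Function.Injective m)
    (Vstar : ℝ) (hmin : ∀ x, Vstar ≤ V x) (hval : ∀ k, V (m k) = Vstar)
    (hexact : ∀ x, V x = Vstar → ∃ k, x = m k)
    (hposdef : ∀ k, (hessianMatrix V (m k)).PosDef)
    (hliminf : ∃ c : ℝ, Vstar < c ∧
      ∀ᶠ x in cocompact (EuclideanSpace ℝ (Fin d)), c ≤ V x)
    (a₀ : ℝ) (ha₀ : 0 < a₀)
    (hint : Integrable (fun x => Real.exp (-V x / a₀)) volume) :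
    ∀ f : EuclideanSpace ℝ (Fin d) →ᵇ ℝ,
      Tendsto
        (fun a : ℝ =>
          (∫ x, f x * Real.exp (-V x / a) ∂volume) / ∫ x, Real.exp (-V x / a) ∂volume)
        (𝓝[>] 0)
        (𝓝 (∑ k : Fin ℓ,
          ((Real.sqrt (hessianMatrix V (m k)).det)⁻¹ /
              ∑ j : Fin ℓ, (Real.sqrt (hessianMatrix V (m j)).det)⁻¹) * f (m k))) := by
  intro f
  set C := ∫ y : EuclideanSpace ℝ (Fin d), Real.exp (-(1/2) * ‖y‖ ^ 2) with hC
  have hC0 : 0 < C := by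
    rw [hC, GaussianFourier.integral_rexp_neg_mul_sq_norm (by norm_num)]
    positivity
  set S := ∑ j : Fin ℓ, (Real.sqrt (hessianMatrix V (m j)).det)⁻¹ with hS
  have hS0 : 0 < S := by
    have : Nonempty (Fin ℓ) := ⟨⟨0, hℓ⟩⟩
    exact Finset.sum_pos (fun k _ => inv_pos.2 (Real.sqrt_pos.2 (hposdef k).det_pos))
      Finset.univ_nonempty
  have h1 := global_laplace V hV ℓ m hm_inj Vstar hmin hval hexact hposdef hliminf a₀ ha₀ hint
    f f.continuous ‖f‖ (fun x => f.norm_coe_le_norm x)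
  have h2 := global_laplace V hV ℓ m hm_inj Vstar hmin hval hexact hposdef hliminf a₀ ha₀ hint
    (fun _ => 1) continuous_const 1 (fun x => by simp)
  simp only [mul_one, one_mul] at h2
  have h3 := h1.div h2 (mul_pos hC0 hS0).ne'
  have e : (∑ k : Fin ℓ, ((Real.sqrt (hessianMatrix V (m k)).det)⁻¹ / S) * f (m k)) =
      C * (∑ k, (Real.sqrt (hessianMatrix V (m k)).det)⁻¹ * f (m k)) / (C * S) := by
    rw [mul_div_mul_left _ _ hC0.ne', Finset.sum_div]
    exact Finset.sum_congr rfl fun k _ => by ring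
  rw [e]
  refine h3.congr' ?_
  filter_upwards [self_mem_nhdsWithin] with a ha
  have ha : 0 < a := ha
  have hs : (√a ^ d)⁻¹ ≠ 0 := (inv_pos.2 (pow_pos (Real.sqrt_pos.2 ha) d)).ne'
  have hx : ∀ x, Real.exp (-(V x - Vstar) / a) = Real.exp (Vstar / a) * Real.exp (-V x / a) :=
    fun x => by rw [← Real.exp_add]; congr 1; ring
  simp only [Pi.div_apply]
  rw [mul_div_mul_left _ _ hs]
  simp_rw [hx, mul_left_comm (f _), integral_const_mul]
  rw [mul_div_mul_left _ _ (Real.exp_pos _).ne']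
end

section
/- Multidimensional Laplace asymptotics at a nondegenerate minimum: Let V : ℝ^d → ℝ be twice continuously differentiable with a unique global minimizer m, at which the Hessian ∇²V(m) is positive definite. Assume lim inf_{|x|→∞} V(x) > V(m), that inf_{|x−m|≥r} V(x) > V(m) for every r > 0, and that ∫_{ℝ^d} e^{−V(x)/a₀} dx < ∞ for some a₀ > 0. Then lim_{a↓0} (2πa)^{−d/2} ∫_{ℝ^d} e^{−(V(x)−V(m))/a} dx = (det ∇²V(m))^{−1/2}. -/
open MeasureTheory Filter Topology Real

lemma taylor_two_s8 {d : ℕ} (V : EuclideanSpace ℝ (Fin d) → ℝ) (hV : ContDiff ℝ 2 V)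
    (m : EuclideanSpace ℝ (Fin d)) (hmin : ∀ x, V m ≤ V x) :
    (fun y => V (m + y) - V m - (1 / 2) * fderiv ℝ (fderiv ℝ V) m y y) =o[𝓝 0]
      fun y => ‖y‖ ^ 2 := by
  set H := fderiv ℝ (fderiv ℝ V) m with hH
  have hsymm : ∀ v w, H v w = H w v :=
    (hV.contDiffAt (x := m)).isSymmSndFDerivAt (by simp)
  have h0 : fderiv ℝ V m = 0 :=
    IsLocalMin.fderiv_eq_zero (Filter.Eventually.of_forall hmin)
  have hd1 : Differentiable ℝ V := hV.differentiable (by norm_num)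
  have hd2 : Differentiable ℝ (fderiv ℝ V) :=
    (hV.fderiv_right (m := 1) (by norm_num)).differentiable (by norm_num)
  have hder : ∀ y, HasFDerivAt (fun y => V (m + y) - (1 / 2) * H y y)
      (fderiv ℝ V (m + y) - H y) y := by
    intro y
    have h1 : HasFDerivAt (fun y => V (m + y)) (fderiv ℝ V (m + y)) y := by
      have := (hd1 (m + y)).hasFDerivAt.comp y ((hasFDerivAt_id y).const_add m)
      simpa [Function.comp_def] using this
    have h2 : HasFDerivAt (fun y => (1 / 2 : ℝ) * H y y) (H y) y := by
      have := (H.hasFDerivAt (x := y)).clm_apply (hasFDerivAt_id y)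
      have := this.const_mul (1 / 2 : ℝ)
      refine this.congr_fderiv ?_
      ext w
      simp [hsymm w y]
      ring
    exact h1.sub h2
  have hlo : (fun y => fderiv ℝ V (m + y) - H y) =o[𝓝 0] fun y => ‖y‖ ^ 1 := by
    have := (hasFDerivAt_iff_isLittleO_nhds_zero.1 (hd2 m).hasFDerivAt)
    simpa [h0] using this.norm_right
  have key := convex_univ.isLittleO_pow_succ (x₀ := (0 : EuclideanSpace ℝ (Fin d)))
    (Set.mem_univ _) (fun y _ => (hder y).hasFDerivWithinAt) (n := 1)
    (by simpa using hlo)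
  simp only [nhdsWithin_univ] at key
  refine key.congr (fun y => ?_) (fun y => ?_)
  · simp; ring
  · simp

open scoped MatrixOrder in
lemma exists_sqrt_map {d : ℕ} (V : EuclideanSpace ℝ (Fin d) → ℝ)
    (m : EuclideanSpace ℝ (Fin d)) (hposdef : (hessianMatrix V m).PosDef) :
    ∃ T : EuclideanSpace ℝ (Fin d) →ₗ[ℝ] EuclideanSpace ℝ (Fin d),
      LinearMap.det T ≠ 0 ∧ |LinearMap.det T| = Real.sqrt (hessianMatrix V m).det ∧
      ∀ y, fderiv ℝ (fderiv ℝ V) m y y = ‖T y‖ ^ 2 := by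
  set M := hessianMatrix V m with hM
  set B := CFC.sqrt M
  have hBB : B * B = M := CFC.sqrt_mul_sqrt_self _ hposdef.posSemidef.nonneg
  have hBsa : IsSelfAdjoint B := (CFC.sqrt_nonneg M).isSelfAdjoint
  have hdet : M.det = B.det * B.det := by rw [← hBB, Matrix.det_mul]
  have hpos := hposdef.det_pos
  refine ⟨Matrix.toEuclideanLin B, ?_, ?_, ?_⟩
  · rw [LinearMap.det_toLpLin]
    intro h
    rw [hdet, h] at hpos
    simp at hpos
  · rw [LinearMap.det_toLpLin, hdet, Real.sqrt_mul_self_eq_abs]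
  · intro y
    have e1 : ‖Matrix.toEuclideanLin B y‖ ^ 2 = y.ofLp ⬝ᵥ (M.mulVec y.ofLp) := by
      have hsa : IsSelfAdjoint (Matrix.toEuclideanCLM (𝕜 := ℝ) B) := hBsa.map _
      rw [← Matrix.inner_toEuclideanCLM, ← hBB, map_mul, ContinuousLinearMap.mul_def,
        ContinuousLinearMap.comp_apply, ← ContinuousLinearMap.adjoint_inner_left,
        hsa.adjoint_eq, real_inner_self_eq_norm_sq]
      rfl
    rw [e1]
    have hy : y = ∑ i, y i • EuclideanSpace.single i (1 : ℝ) := by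
      ext j
      simp [Finset.sum_apply, Pi.single_apply]
    conv_lhs => rw [hy]
    simp only [map_sum, map_smul, sum_apply, smul_apply,
      dotProduct, Matrix.mulVec, smul_eq_mul, Finset.mul_sum, hM, hessianMatrix]
    rw [Finset.sum_comm]
    refine Finset.sum_congr rfl fun i _ => Finset.sum_congr rfl fun j _ => ?_
    ring

lemma gaussian_map {d : ℕ} (T : EuclideanSpace ℝ (Fin d) →ₗ[ℝ] EuclideanSpace ℝ (Fin d))
    (hT : LinearMap.det T ≠ 0) :
    ∫ y, Real.exp (-(‖T y‖ ^ 2 / 2)) = (2 * π) ^ ((d : ℝ) / 2) * |LinearMap.det T|⁻¹ := by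
  have hc : Continuous T := T.continuous_of_finiteDimensional
  have h1 : ∫ y, Real.exp (-(‖T y‖ ^ 2 / 2)) =
      ∫ z, Real.exp (-(‖z‖ ^ 2 / 2)) ∂(Measure.map T volume) := by
    rw [integral_map hc.measurable.aemeasurable]
    exact (by fun_prop : Continuous _).aestronglyMeasurable
  rw [h1, Measure.map_linearMap_addHaar_eq_smul_addHaar _ hT, integral_smul_measure]
  have h2 := GaussianFourier.integral_rexp_neg_mul_sq_norm
    (V := EuclideanSpace ℝ (Fin d)) (b := 1 / 2) (by norm_num)
  have h3 : (fun z : EuclideanSpace ℝ (Fin d) => Real.exp (-(‖z‖ ^ 2 / 2))) =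
      fun z => Real.exp (-(1 / 2) * ‖z‖ ^ 2) := by
    ext z; ring_nf
  rw [h3, h2, ENNReal.toReal_ofReal (abs_nonneg _), abs_inv, smul_eq_mul, mul_comm]
  congr 2
  · ring
  · simp

lemma gauss_integrable {d : ℕ} (c : ℝ) (hc : 0 < c) :
    Integrable (fun y : EuclideanSpace ℝ (Fin d) => Real.exp (-(c * ‖y‖ ^ 2))) := by
  have h := (GaussianFourier.integrable_cexp_neg_mul_sq_norm_add
    (V := EuclideanSpace ℝ (Fin d)) (b := (c : ℂ)) (by simpa using hc) 0 0).norm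
  refine h.congr (Filter.Eventually.of_forall fun y => ?_)
  simp only [Complex.norm_exp]
  congr 1
  norm_cast
  simp [← Complex.ofReal_pow]

lemma local_part {d : ℕ} (f : EuclideanSpace ℝ (Fin d) → ℝ) (hf : Continuous f)
    (T : EuclideanSpace ℝ (Fin d) →ₗ[ℝ] EuclideanSpace ℝ (Fin d))
    (hlo : (fun y => f y - ‖T y‖ ^ 2 / 2) =o[𝓝 0] fun y => ‖y‖ ^ 2)
    (c r : ℝ) (hc : 0 < c) (hr : 0 < r) (hb : ∀ y ∈ Metric.ball 0 r, c * ‖y‖ ^ 2 ≤ f y) :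
    Tendsto (fun a : ℝ => (√a ^ d)⁻¹ * ∫ x in Metric.ball 0 r, Real.exp (-f x / a)) (𝓝[>] 0)
      (𝓝 (∫ y, Real.exp (-(‖T y‖ ^ 2 / 2)))) := by
  set S := Metric.ball (0 : EuclideanSpace ℝ (Fin d)) r
  have hS : MeasurableSet S := measurableSet_ball
  have hmain : Tendsto (fun a : ℝ => ∫ y, S.indicator (fun x => Real.exp (-f x / a)) (√a • y))
      (𝓝[>] 0) (𝓝 (∫ y, Real.exp (-(‖T y‖ ^ 2 / 2)))) := by
    refine tendsto_integral_filter_of_dominated_convergence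
      (fun y => Real.exp (-(c * ‖y‖ ^ 2))) ?_ ?_ (gauss_integrable c hc) ?_
    · refine Filter.Eventually.of_forall fun a => ?_
      have hm : Measurable (S.indicator (fun x => Real.exp (-f x / a))) :=
        (by fun_prop : Continuous fun x => Real.exp (-f x / a)).measurable.indicator hS
      exact (hm.comp (measurable_const_smul (√a))).aestronglyMeasurable
    · filter_upwards [self_mem_nhdsWithin] with a ha
      have ha : 0 < a := ha
      refine Filter.Eventually.of_forall fun y => ?_
      by_cases h : √a • y ∈ S
      · rw [Set.indicator_of_mem h, Real.norm_of_nonneg (Real.exp_pos _).le]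
        apply Real.exp_le_exp.2
        have := hb _ h
        rw [norm_smul, mul_pow, Real.norm_of_nonneg (Real.sqrt_nonneg a), Real.sq_sqrt ha.le] at this
        rw [div_le_iff₀ ha]
        linarith
      · rw [Set.indicator_of_notMem h]
        simpa using (Real.exp_pos _).le
    · refine Filter.Eventually.of_forall fun y => ?_
      have ht : Tendsto (fun a : ℝ => √a • y) (𝓝[>] 0) (𝓝 0) := by
        have : Continuous fun a : ℝ => √a • y := by fun_prop
        simpa using (this.tendsto 0).mono_left nhdsWithin_le_nhds
      have hev : ∀ᶠ a : ℝ in 𝓝[>] 0, √a • y ∈ S :=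
        ht.eventually (Metric.ball_mem_nhds _ hr)
      have h1 : (fun a : ℝ => f (√a • y) - ‖T (√a • y)‖ ^ 2 / 2) =o[𝓝[>] 0] fun a => a := by
        refine (hlo.comp_tendsto ht).trans_isBigO ?_
        refine Asymptotics.IsBigO.of_bound (‖y‖ ^ 2) ?_
        filter_upwards [self_mem_nhdsWithin] with a ha
        have ha : 0 < a := ha
        simp [norm_smul, mul_pow, abs_of_pos ha, Real.sq_sqrt ha.le, mul_comm]
      have h2 := h1.tendsto_div_nhds_zero
      have h3 : Tendsto (fun a : ℝ => Real.exp (-((f (√a • y) - ‖T (√a • y)‖ ^ 2 / 2) / a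
          + ‖T y‖ ^ 2 / 2))) (𝓝[>] 0) (𝓝 (Real.exp (-(‖T y‖ ^ 2 / 2)))) := by
        have := ((h2.add_const (‖T y‖ ^ 2 / 2)).neg).rexp
        simpa using this
      refine h3.congr' ?_
      filter_upwards [self_mem_nhdsWithin, hev] with a ha hm
      have ha : 0 < a := ha
      rw [Set.indicator_of_mem hm]
      congr 1
      rw [map_smul, norm_smul, mul_pow, Real.norm_of_nonneg (Real.sqrt_nonneg a),
        Real.sq_sqrt ha.le]
      field_simp
      ring
  refine hmain.congr fun a => ?_
  rw [Measure.integral_comp_smul_of_nonneg _ _ _ (hR := Real.sqrt_nonneg a), integral_indicator hS]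
  simp

lemma tail_part {d : ℕ} (f : EuclideanSpace ℝ (Fin d) → ℝ)
    (S : Set (EuclideanSpace ℝ (Fin d))) (hS : MeasurableSet S)
    (δ : ℝ) (hδ : 0 < δ) (hb : ∀ y ∈ S, δ ≤ f y) (a₀ : ℝ) (ha₀ : 0 < a₀)
    (hint : Integrable (fun x => Real.exp (-f x / a₀)) volume) :
    Tendsto (fun a : ℝ => (√a ^ d)⁻¹ * ∫ x in S, Real.exp (-f x / a)) (𝓝[>] 0) (𝓝 0) := by
  set I := ∫ x in S, Real.exp (-f x / a₀)
  have hlim : Tendsto (fun a : ℝ => (√a ^ d)⁻¹ * (Real.exp (-δ * a⁻¹) * (Real.exp (δ / a₀) * I)))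
      (𝓝[>] 0) (𝓝 0) := by
    have h := (tendsto_rpow_mul_exp_neg_mul_atTop_nhds_zero ((d : ℝ) / 2) δ hδ).comp
      (tendsto_inv_nhdsGT_zero (𝕜 := ℝ))
    have h := h.mul_const (Real.exp (δ / a₀) * I)
    rw [zero_mul] at h
    refine h.congr' ?_
    filter_upwards [self_mem_nhdsWithin] with a ha
    have ha : 0 < a := ha
    simp only [Function.comp_apply]
    rw [mul_assoc]
    congr 1
    rw [Real.inv_rpow ha.le, Real.sqrt_eq_rpow, ← Real.rpow_natCast, ← Real.rpow_mul ha.le]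
    congr 2
    ring
  refine tendsto_of_tendsto_of_tendsto_of_le_of_le' tendsto_const_nhds hlim ?_ ?_
  · refine Filter.Eventually.of_forall fun a => ?_
    have : 0 ≤ ∫ x in S, Real.exp (-f x / a) := integral_nonneg fun x => (Real.exp_pos _).le
    positivity
  · filter_upwards [Ioo_mem_nhdsGT ha₀] with a ⟨ha, haa⟩
    refine mul_le_mul_of_nonneg_left ?_ (by positivity)
    rw [← mul_assoc, ← integral_const_mul]
    refine integral_mono_of_nonneg (Filter.Eventually.of_forall fun x => (Real.exp_pos _).le)
      (hint.integrableOn.const_mul _) ?_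
    refine (ae_restrict_iff' hS).2 (Filter.Eventually.of_forall fun x hx => ?_)
    simp only [← Real.exp_add]
    apply Real.exp_le_exp.2
    have h1 := hb x hx
    have h2 : a₀⁻¹ ≤ a⁻¹ := inv_anti₀ ha haa.le
    simp only [div_eq_mul_inv]
    nlinarith

lemma local_bound {d : ℕ} (f : EuclideanSpace ℝ (Fin d) → ℝ)
    (T : EuclideanSpace ℝ (Fin d) →ₗ[ℝ] EuclideanSpace ℝ (Fin d))
    (hT : LinearMap.det T ≠ 0)
    (hlo : (fun y => f y - ‖T y‖ ^ 2 / 2) =o[𝓝 0] fun y => ‖y‖ ^ 2) :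
    ∃ c r : ℝ, 0 < c ∧ 0 < r ∧ ∀ y ∈ Metric.ball 0 r, c * ‖y‖ ^ 2 ≤ f y := by
  have hker : LinearMap.ker T = ⊥ := by
    rw [LinearMap.ker_eq_bot]
    exact (LinearMap.equivOfDetNeZero T hT).injective
  obtain ⟨K, hK, hlip⟩ := T.exists_antilipschitzWith hker
  have hK' : (0 : ℝ) < K := by exact_mod_cast hK
  set c : ℝ := 1 / (4 * (K : ℝ) ^ 2) with hcdef
  have hc : 0 < c := by positivity
  obtain ⟨r, hr, h⟩ := Metric.eventually_nhds_iff_ball.1 (hlo.def hc)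
  refine ⟨c, r, hc, hr, fun y hy => ?_⟩
  have h1 := h y hy
  have h2 : ‖y‖ ≤ K * ‖T y‖ := by simpa using hlip.le_mul_dist y 0
  have h3 : ‖y‖ ^ 2 ≤ K ^ 2 * ‖T y‖ ^ 2 := by
    rw [← mul_pow]; gcongr
  have h4 : 4 * c * ‖y‖ ^ 2 ≤ ‖T y‖ ^ 2 := by
    rw [hcdef]
    field_simp
    linarith
  rw [Real.norm_eq_abs, Real.norm_of_nonneg (by positivity : (0:ℝ) ≤ ‖y‖ ^ 2)] at h1
  have := (abs_le.1 h1).1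
  linarith

/-- **Multidimensional Laplace asymptotics at a nondegenerate minimum.**
Let `V : ℝ^d → ℝ` be `C²` with unique global minimizer `m`, where the Hessian is positive
definite.  Assume `liminf_{|x|→∞} V(x) > V(m)`, that `inf_{|x−m|≥r} V(x) > V(m)` for every
`r > 0`, and `∫ e^{−V/a₀} dx < ∞` for some `a₀ > 0`.  Then
`lim_{a↓0} (2πa)^{−d/2} ∫ e^{−(V(x)−V(m))/a} dx = (det ∇²V(m))^{−1/2}`. -/
theorem laplace_asymptotics
    {d : ℕ} (V : EuclideanSpace ℝ (Fin d) → ℝ) (hV : ContDiff ℝ 2 V)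
    (m : EuclideanSpace ℝ (Fin d))
    (hmin : ∀ x, V m ≤ V x) (huniq : ∀ x, V x = V m → x = m)
    (hposdef : (hessianMatrix V m).PosDef)
    (hliminf : ∃ c : ℝ, V m < c ∧
      ∀ᶠ x in cocompact (EuclideanSpace ℝ (Fin d)), c ≤ V x)
    (hsep : ∀ r : ℝ, 0 < r → ∃ c : ℝ, V m < c ∧ ∀ x, r ≤ dist x m → c ≤ V x)
    (a₀ : ℝ) (ha₀ : 0 < a₀)
    (hint : Integrable (fun x => Real.exp (-V x / a₀)) volume) :
    Tendsto
      (fun a : ℝ =>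
        (2 * π * a) ^ (-(d : ℝ) / 2) * ∫ x, Real.exp (-(V x - V m) / a) ∂volume)
      (𝓝[>] 0)
      (𝓝 ((Real.sqrt (hessianMatrix V m).det)⁻¹)) := by
  obtain ⟨T, hT, hdet, hQ⟩ := exists_sqrt_map V m hposdef
  set f : EuclideanSpace ℝ (Fin d) → ℝ := fun y => V (m + y) - V m with hf
  have hVc : Continuous V := hV.continuous
  have hfc : Continuous f := by fun_prop
  have hlo : (fun y => f y - ‖T y‖ ^ 2 / 2) =o[𝓝 0] fun y => ‖y‖ ^ 2 := by
    refine (taylor_two_s8 V hV m hmin).congr_left fun y => ?_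
    rw [hQ]; ring
  obtain ⟨c, r, hc, hr, hb⟩ := local_bound f T hT hlo
  obtain ⟨b, hb1, hb2⟩ := hsep r hr
  have hfint : Integrable (fun x => Real.exp (-f x / a₀)) volume := by
    have h := (hint.comp_add_left m).const_mul (Real.exp (V m / a₀))
    refine h.congr (Filter.Eventually.of_forall fun x => ?_)
    simp only [hf, ← Real.exp_add]
    congr 1
    ring
  have hf0 : ∀ y, 0 ≤ f y := fun y => sub_nonneg.2 (hmin _)
  have htail := tail_part f (Metric.ball 0 r)ᶜ measurableSet_ball.compl (b - V m)
    (sub_pos.2 hb1) (fun y hy => by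
      have : r ≤ dist (m + y) m := by simpa using hy
      have := hb2 _ this
      simp only [hf]; linarith) a₀ ha₀ hfint
  have hloc := local_part f hfc T hlo c r hc hr hb
  have hsum := (hloc.add htail).const_mul ((2 * π) ^ (-(d : ℝ) / 2))
  rw [add_zero, gaussian_map T hT, hdet, ← mul_assoc, ← Real.rpow_add (by positivity),
    neg_div, neg_add_cancel, Real.rpow_zero, one_mul] at hsum
  refine hsum.congr' ?_
  filter_upwards [Ioo_mem_nhdsGT ha₀] with a ⟨ha, haa⟩
  have hia : Integrable (fun x => Real.exp (-f x / a)) volume := by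
    refine hfint.mono' (by fun_prop : Continuous _).aestronglyMeasurable
      (Filter.Eventually.of_forall fun x => ?_)
    rw [Real.norm_of_nonneg (Real.exp_pos _).le]
    apply Real.exp_le_exp.2
    rw [neg_div, neg_div]
    have := hf0 x
    have : f x / a₀ ≤ f x / a := by gcongr
    linarith
  rw [← mul_add, integral_add_compl measurableSet_ball hia,
    ← integral_add_left_eq_self (fun x => Real.exp (-(V x - V m) / a)) m, ← mul_assoc, neg_div]
  congr 1
  rw [Real.mul_rpow (by positivity) ha.le]
  congr 1
  rw [Real.rpow_neg ha.le, Real.sqrt_eq_rpow, ← Real.rpow_natCast, ← Real.rpow_mul ha.le]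
  congr 2
  ring
end

section
/- Concentration of Gibbs measures on the set of global minima: Let V : ℝ^d → ℝ be continuous, attaining its global minimum value V* on a nonempty compact set M = argmin V. Assume lim inf_{|x|→∞} V(x) > V* and ∫_{ℝ^d} e^{−V(x)/a₀} dx < ∞ for some a₀ > 0. For a ∈ (0, a₀], let π_a be the probability measure with density proportional to e^{−V(x)/a}. Then for every open set U ⊇ M, π_a(U) → 1 as a ↓ 0. -/
open MeasureTheory Filter Topology

/-- **Concentration of Gibbs measures on the set of global minima.**
Let `V : ℝ^d → ℝ` be continuous, attaining its global minimum value `V*` on a nonempty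
compact set `M = argmin V`.  Assume `liminf_{|x|→∞} V(x) > V*` and `∫ e^{−V/a₀} dx < ∞`
for some `a₀ > 0`.  Let `π_a` be the Gibbs probability measure with density proportional to
`e^{−V(x)/a}`.  Then for every open `U ⊇ M`, `π_a(U) → 1` as `a ↓ 0`. -/
theorem gibbs_concentration_on_minima
    {d : ℕ} (V : EuclideanSpace ℝ (Fin d) → ℝ) (hV : Continuous V)
    (M : Set (EuclideanSpace ℝ (Fin d))) (hM : M = {x | ∀ y, V x ≤ V y})
    (hMne : M.Nonempty) (hMcpt : IsCompact M)
    (Vstar : ℝ) (hVstar : ∀ x ∈ M, V x = Vstar)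
    (hliminf : ∃ c : ℝ, Vstar < c ∧
      ∀ᶠ x in cocompact (EuclideanSpace ℝ (Fin d)), c ≤ V x)
    (a₀ : ℝ) (ha₀ : 0 < a₀)
    (hint : Integrable (fun x => Real.exp (-V x / a₀)) volume)
    (U : Set (EuclideanSpace ℝ (Fin d))) (hUopen : IsOpen U) (hMU : M ⊆ U) :
    Tendsto
      (fun a : ℝ =>
        (∫ x in U, Real.exp (-V x / a) ∂volume) / ∫ x, Real.exp (-V x / a) ∂volume)
      (𝓝[>] 0) (𝓝 1) := by
  obtain ⟨x0, hx0⟩ := hMne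
  have hmin : ∀ y, Vstar ≤ V y := by
    intro y
    rw [← hVstar x0 hx0]
    rw [hM] at hx0
    exact hx0 y
  have hgap : ∃ δ : ℝ, 0 < δ ∧ ∀ x, x ∉ U → Vstar + 2 * δ ≤ V x := by
    obtain ⟨c, hc, hev⟩ := hliminf
    obtain ⟨K, hK, hKc⟩ := mem_cocompact.1 hev
    have hKU : IsCompact (K \ U) := hK.diff hUopen
    rcases (K \ U).eq_empty_or_nonempty with he | hne
    · refine ⟨(c - Vstar) / 2, by linarith, fun x hx => ?_⟩
      have hxK : x ∉ K := fun h => by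
        have : x ∈ K \ U := ⟨h, hx⟩
        rw [he] at this
        exact this
      have : c ≤ V x := hKc hxK
      linarith
    · obtain ⟨z, hz, hzmin⟩ := hKU.exists_isMinOn hne hV.continuousOn
      have hzV : Vstar < V z := by
        by_contra hcon
        apply hz.2
        apply hMU
        rw [hM]
        intro y
        exact (not_lt.1 hcon).trans (hmin y)
      have h0 : Vstar < min c (V z) := lt_min hc hzV
      refine ⟨(min c (V z) - Vstar) / 2, by linarith, fun x hx => ?_⟩
      have : min c (V z) ≤ V x := by
        by_cases hxK : x ∈ K
        · exact (min_le_right _ _).trans (hzmin ⟨hxK, hx⟩)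
        · exact (min_le_left _ _).trans (hKc hxK)
      linarith
  obtain ⟨δ, hδ, hout⟩ := hgap
  set g : EuclideanSpace ℝ (Fin d) → ℝ := fun x => Real.exp (-V x / a₀) with hg
  have hgpos : ∀ x, 0 < g x := fun x => Real.exp_pos _
  set S : Set (EuclideanSpace ℝ (Fin d)) := {x | V x < Vstar + δ} with hS
  have hSo : IsOpen S := isOpen_lt hV continuous_const
  have hSne : S.Nonempty := ⟨x0, by simp [hS, hVstar x0 hx0, hδ]⟩
  set C := ∫ x in Uᶜ, g x with hC
  set c := ∫ x in S, g x with hc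
  have hcpos : 0 < c := by
    rw [hc, setIntegral_pos_iff_support_of_nonneg_ae
      (Eventually.of_forall fun x => (hgpos x).le) hint.integrableOn]
    have : Function.support g = Set.univ := by
      ext x
      simp [(hgpos x).ne']
    rw [this, Set.univ_inter]
    exact hSo.measure_pos volume hSne
  have hfac : ∀ a x, Real.exp (-V x / a) = g x * Real.exp (-V x * (a⁻¹ - a₀⁻¹)) := by
    intro a x
    rw [hg, ← Real.exp_add]
    congr 1
    ring
  have hInt : ∀ a, 0 < a → a ≤ a₀ → Integrable (fun x => Real.exp (-V x / a)) volume := by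
    intro a ha haa
    have ht : 0 ≤ a⁻¹ - a₀⁻¹ := sub_nonneg.2 (inv_anti₀ ha haa)
    refine (hint.mul_const (Real.exp (-Vstar * (a⁻¹ - a₀⁻¹)))).mono'
      (by fun_prop) (Eventually.of_forall fun x => ?_)
    rw [Real.norm_of_nonneg (Real.exp_pos _).le, hfac]
    refine mul_le_mul_of_nonneg_left (Real.exp_le_exp.2 ?_) (hgpos x).le
    exact mul_le_mul_of_nonneg_right (neg_le_neg (hmin x)) ht
  have hlow : ∀ a, 0 < a → a ≤ a₀ →
      c * Real.exp (-(Vstar + δ) * (a⁻¹ - a₀⁻¹)) ≤ ∫ x, Real.exp (-V x / a) := by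
    intro a ha haa
    have ht : 0 ≤ a⁻¹ - a₀⁻¹ := sub_nonneg.2 (inv_anti₀ ha haa)
    refine le_trans ?_ (setIntegral_le_integral (s := S) (hInt a ha haa)
      (Eventually.of_forall fun x => (Real.exp_pos _).le))
    rw [hc, ← integral_mul_const]
    refine setIntegral_mono_on (hint.mul_const _).integrableOn (hInt a ha haa).integrableOn
      hSo.measurableSet fun x hx => ?_
    rw [hfac a x]
    refine mul_le_mul_of_nonneg_left (Real.exp_le_exp.2 ?_) (hgpos x).le
    exact mul_le_mul_of_nonneg_right (neg_le_neg (le_of_lt hx)) ht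
  have hup : ∀ a, 0 < a → a ≤ a₀ →
      ∫ x in Uᶜ, Real.exp (-V x / a) ≤ C * Real.exp (-(Vstar + 2 * δ) * (a⁻¹ - a₀⁻¹)) := by
    intro a ha haa
    have ht : 0 ≤ a⁻¹ - a₀⁻¹ := sub_nonneg.2 (inv_anti₀ ha haa)
    rw [hC, ← integral_mul_const]
    refine setIntegral_mono_on (hInt a ha haa).integrableOn (hint.mul_const _).integrableOn
      hUopen.measurableSet.compl fun x hx => ?_
    rw [hfac a x]
    refine mul_le_mul_of_nonneg_left (Real.exp_le_exp.2 ?_) (hgpos x).le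
    exact mul_le_mul_of_nonneg_right (neg_le_neg (hout x hx)) ht
  have hZpos : ∀ a, 0 < a → a ≤ a₀ → 0 < ∫ x, Real.exp (-V x / a) := fun a ha haa =>
    lt_of_lt_of_le (mul_pos hcpos (Real.exp_pos _)) (hlow a ha haa)
  have hCnn : 0 ≤ C := integral_nonneg fun x => (hgpos x).le
  have hR : Tendsto (fun a : ℝ => (∫ x in Uᶜ, Real.exp (-V x / a)) / ∫ x, Real.exp (-V x / a))
      (𝓝[>] 0) (𝓝 0) := by
    have hlim : Tendsto (fun a : ℝ => C / c * Real.exp (-(δ * (a⁻¹ - a₀⁻¹)))) (𝓝[>] 0) (𝓝 0) := by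
      have h1 : Tendsto (fun a : ℝ => δ * (a⁻¹ - a₀⁻¹)) (𝓝[>] 0) atTop :=
        (tendsto_atTop_add_const_right _ (-a₀⁻¹) tendsto_inv_nhdsGT_zero).const_mul_atTop hδ
      have h2 := (Real.tendsto_exp_neg_atTop_nhds_zero.comp h1).const_mul (C / c)
      simpa using h2
    refine squeeze_zero' ?_ ?_ hlim
    · exact Eventually.of_forall fun a => div_nonneg
        (integral_nonneg fun x => (Real.exp_pos _).le) (integral_nonneg fun x => (Real.exp_pos _).le)
    · filter_upwards [Ioc_mem_nhdsGT ha₀] with a ha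
      rw [div_le_iff₀ (hZpos a ha.1 ha.2)]
      refine (hup a ha.1 ha.2).trans ?_
      have h3 := mul_le_mul_of_nonneg_left (hlow a ha.1 ha.2)
        (mul_nonneg (div_nonneg hCnn hcpos.le) (Real.exp_pos (-(δ * (a⁻¹ - a₀⁻¹)))).le)
      refine le_trans (le_of_eq ?_) h3
      have h4 : Real.exp (-(Vstar + 2 * δ) * (a⁻¹ - a₀⁻¹)) =
          Real.exp (-(δ * (a⁻¹ - a₀⁻¹))) * Real.exp (-(Vstar + δ) * (a⁻¹ - a₀⁻¹)) := by
        rw [← Real.exp_add]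
        congr 1
        ring
      rw [h4]
      field_simp
  have hfin := (tendsto_const_nhds (x := (1 : ℝ))).sub hR
  rw [sub_zero] at hfin
  refine hfin.congr' ?_
  filter_upwards [Ioc_mem_nhdsGT ha₀] with a ha
  have hsum := integral_add_compl hUopen.measurableSet (hInt a ha.1 ha.2)
  have hZ := (hZpos a ha.1 ha.2).ne'
  rw [eq_div_iff hZ, sub_mul, div_mul_cancel₀ _ hZ]
  linarith
end

section
/- Quantitative bias bound for the single-sample stochastic perturbation gradient estimator: Let Φ : ℝ^d → ℝ be continuously differentiable with ∇Φ Lipschitz of constant L, and let ξ be an ℝ^d-valued random vector with E[ξ] = 0, E[ξ ξᵀ] = I, and E[‖ξ‖³] < ∞. Then for every x ∈ ℝ^d and every δ > 0, ‖(1/δ) E[Φ(x + δξ) ξ] − ∇Φ(x)‖ ≤ (L δ / 2) E[‖ξ‖³]. -/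
open MeasureTheory

lemma taylor_grad_bound {d : ℕ} (Φ : EuclideanSpace ℝ (Fin d) → ℝ) (hΦ : ContDiff ℝ 1 Φ)
    (L : ℝ)
    (hLip : ∀ u v : EuclideanSpace ℝ (Fin d),
      ‖gradient Φ u - gradient Φ v‖ ≤ L * ‖u - v‖)
    (x h : EuclideanSpace ℝ (Fin d)) :
    ‖Φ (x + h) - Φ x - inner ℝ (gradient Φ x) h‖ ≤ L / 2 * ‖h‖ ^ 2 := by
  have hd : ∀ t : ℝ, HasDerivAt
      (fun t : ℝ => Φ (x + t • h) - Φ x - t * inner ℝ (gradient Φ x) h)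
      (inner ℝ (gradient Φ (x + t • h)) h - inner ℝ (gradient Φ x) h) t := by
    intro t
    have h1 : HasFDerivAt Φ (InnerProductSpace.toDual ℝ _ (gradient Φ (x + t • h))) (x + t • h) :=
      ((hΦ.differentiable one_ne_zero) _).hasGradientAt.hasFDerivAt
    have h2 : HasDerivAt (fun t : ℝ => x + t • h) h t := by
      simpa using ((hasDerivAt_id t).smul_const h).const_add x
    have h3 := h1.comp_hasDerivAt t h2
    have h4 := (hasDerivAt_id t).mul_const (inner ℝ (gradient Φ x) h)
    have h5 := (h3.sub_const (Φ x)).sub h4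
    refine h5.congr_deriv ?_ |>.congr_of_eventuallyEq (Filter.Eventually.of_forall fun s => ?_)
    · rw [InnerProductSpace.toDual_apply_apply, one_mul]
    · rfl
  have hB : ∀ t : ℝ, HasDerivAt (fun t : ℝ => L / 2 * ‖h‖ ^ 2 * t ^ 2) (L * ‖h‖ ^ 2 * t) t := by
    intro t
    have := (hasDerivAt_pow 2 t).const_mul (L / 2 * ‖h‖ ^ 2)
    refine this.congr_deriv ?_
    push_cast
    ring
  have key := image_norm_le_of_norm_deriv_right_le_deriv_boundary (a := 0) (b := 1)
    (f := fun t : ℝ => Φ (x + t • h) - Φ x - t * inner ℝ (gradient Φ x) h)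
    (fun t _ => (hd t).continuousAt.continuousWithinAt)
    (fun t _ => (hd t).hasDerivWithinAt) (B := fun t : ℝ => L / 2 * ‖h‖ ^ 2 * t ^ 2)
    (by simp) hB (by
      intro t ht
      rw [← inner_sub_left]
      refine (norm_inner_le_norm _ _).trans ?_
      have := hLip (x + t • h) x
      rw [add_sub_cancel_left, norm_smul, Real.norm_of_nonneg ht.1] at this
      calc _ ≤ L * (t * ‖h‖) * ‖h‖ := by gcongr
        _ = _ := by ring)
    (Set.right_mem_Icc.2 zero_le_one)
  simpa using key

/-- **Quantitative bias bound for the single-sample stochastic perturbation gradient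
estimator.**  Let `Φ : ℝ^d → ℝ` be continuously differentiable with `L`-Lipschitz gradient,
and let `ξ` be a random vector with mean zero, identity covariance and finite third moment.
Then for every `x` and every `δ > 0`,
`‖(1/δ) E[Φ(x + δξ) ξ] − ∇Φ(x)‖ ≤ (L δ / 2) E[‖ξ‖³]`. -/
theorem perturbation_gradient_estimator_bias_bound
    {d : ℕ} (Φ : EuclideanSpace ℝ (Fin d) → ℝ) (hΦ : ContDiff ℝ 1 Φ)
    (L : ℝ) (hL : 0 ≤ L)
    (hLip : ∀ u v : EuclideanSpace ℝ (Fin d),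
      ‖gradient Φ u - gradient Φ v‖ ≤ L * ‖u - v‖)
    {Ω : Type*} {mΩ : MeasurableSpace Ω} (P : Measure Ω) [IsProbabilityMeasure P]
    (ξ : Ω → EuclideanSpace ℝ (Fin d)) (hξmeas : Measurable ξ)
    (hmom : Integrable (fun ω => ‖ξ ω‖ ^ 3) P)
    (hmean : (∫ ω, ξ ω ∂P) = 0)
    (hcov : ∀ i j : Fin d, (∫ ω, ξ ω i * ξ ω j ∂P) = if i = j then 1 else 0)
    (x : EuclideanSpace ℝ (Fin d)) (δ : ℝ) (hδ : 0 < δ) :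
    ‖(δ⁻¹ • ∫ ω, Φ (x + δ • ξ ω) • ξ ω ∂P) - gradient Φ x‖
      ≤ L * δ / 2 * ∫ ω, ‖ξ ω‖ ^ 3 ∂P := by
  set g := gradient Φ x with hg
  have hsm := hξmeas.aestronglyMeasurable (μ := P)
  have hi1 : Integrable ξ P := by
    refine ((integrable_const (1:ℝ)).add hmom).mono' hsm (Filter.Eventually.of_forall fun ω => ?_)
    have := norm_nonneg (ξ ω)
    simp only [Pi.add_apply]
    nlinarith [mul_nonneg this (sq_nonneg (‖ξ ω‖ - 1)), sq_nonneg (‖ξ ω‖ - 1)]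
  have hi2 : Integrable (fun ω => ‖ξ ω‖ ^ 2) P := by
    refine ((integrable_const (1:ℝ)).add hmom).mono' (hsm.norm.pow 2)
      (Filter.Eventually.of_forall fun ω => ?_)
    have := norm_nonneg (ξ ω)
    simp only [Pi.add_apply, norm_pow, norm_norm]
    nlinarith [mul_nonneg this (sq_nonneg (‖ξ ω‖ - 1)), sq_nonneg (‖ξ ω‖ - 1)]
  have hi3 : Integrable (fun ω => (inner ℝ g (ξ ω) : ℝ) • ξ ω) P := by
    refine (hi2.const_mul ‖g‖).mono' ?_ (Filter.Eventually.of_forall fun ω => ?_)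
    · have hin : Measurable fun ω => (inner ℝ g (ξ ω) : ℝ) := measurable_const.inner hξmeas
      exact (hin.smul hξmeas).aestronglyMeasurable
    · rw [norm_smul, pow_two, ← mul_assoc]
      gcongr
      exact norm_inner_le_norm (𝕜 := ℝ) _ _
  have hcross : ∀ i j : Fin d, Integrable (fun ω => ξ ω i * ξ ω j) P := by
    intro i j
    refine hi2.mono' (by fun_prop) (Filter.Eventually.of_forall fun ω => ?_)
    rw [norm_mul, pow_two]
    gcongr <;> exact PiLp.norm_apply_le _ _
  have hcg : ∫ ω, (inner ℝ g (ξ ω) : ℝ) • ξ ω ∂P = g := by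
    ext i
    have := (EuclideanSpace.proj (𝕜 := ℝ) i).integral_comp_comm hi3
    refine Eq.trans this.symm ?_
    change ∫ ω, ((inner ℝ g (ξ ω) : ℝ) • ξ ω) i ∂P = g i
    have e : ∀ ω, ((inner ℝ g (ξ ω) : ℝ) • ξ ω) i = ∑ j, g j * (ξ ω j * ξ ω i) := by
      intro ω
      simp only [PiLp.smul_apply, smul_eq_mul, PiLp.inner_apply, Finset.sum_mul]
      refine Finset.sum_congr rfl fun j _ => ?_
      simp
      ring
    simp_rw [e]
    rw [integral_finsetSum _ (fun j _ => (hcross j i).const_mul _)]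
    simp [integral_const_mul, hcov]
  set R : Ω → ℝ := fun ω => Φ (x + δ • ξ ω) - Φ x - inner ℝ g (δ • ξ ω) with hR
  have hRb : ∀ ω, ‖R ω • ξ ω‖ ≤ L / 2 * δ ^ 2 * ‖ξ ω‖ ^ 3 := by
    intro ω
    rw [norm_smul]
    have := taylor_grad_bound Φ hΦ L hLip x (δ • ξ ω)
    rw [norm_smul δ, Real.norm_of_nonneg hδ.le] at this
    calc _ ≤ (L / 2 * (δ * ‖ξ ω‖) ^ 2) * ‖ξ ω‖ := by gcongr
      _ = _ := by ring
  have hRm : Measurable R := by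
    have := hΦ.continuous.measurable
    have h2 : Measurable fun ω => δ • ξ ω := hξmeas.const_smul δ
    exact ((this.comp (measurable_const.add h2)).sub_const _).sub (measurable_const.inner h2)
  have hi4 : Integrable (fun ω => R ω • ξ ω) P :=
    (hmom.const_mul _).mono' (hRm.smul hξmeas).aestronglyMeasurable
      (Filter.Eventually.of_forall hRb)
  have hdec : ∀ ω, Φ (x + δ • ξ ω) • ξ ω
      = Φ x • ξ ω + δ • ((inner ℝ g (ξ ω) : ℝ) • ξ ω) + R ω • ξ ω := by
    intro ω
    simp only [hR, inner_smul_right, smul_smul, ← add_smul]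
    congr 1
    ring
  have hint : ∫ ω, Φ (x + δ • ξ ω) • ξ ω ∂P = δ • g + ∫ ω, R ω • ξ ω ∂P := by
    simp_rw [hdec]
    have ha : Integrable (fun ω => Φ x • ξ ω) P := hi1.smul (Φ x)
    have hb : Integrable (fun ω => δ • ((inner ℝ g (ξ ω) : ℝ) • ξ ω)) P := hi3.smul δ
    have hab : Integrable (fun ω => Φ x • ξ ω + δ • ((inner ℝ g (ξ ω) : ℝ) • ξ ω)) P := ha.add hb
    rw [integral_add hab hi4, integral_add ha hb, integral_smul, integral_smul, hmean, hcg]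
    simp
  rw [hint, smul_add, inv_smul_smul₀ hδ.ne', add_sub_cancel_left, norm_smul, norm_inv,
    Real.norm_of_nonneg hδ.le]
  have hfin : ‖∫ ω, R ω • ξ ω ∂P‖ ≤ L / 2 * δ ^ 2 * ∫ ω, ‖ξ ω‖ ^ 3 ∂P := by
    rw [← integral_const_mul]
    exact norm_integral_le_of_norm_le (hmom.const_mul _) (Filter.Eventually.of_forall hRb)
  calc _ ≤ δ⁻¹ * (L / 2 * δ ^ 2 * ∫ ω, ‖ξ ω‖ ^ 3 ∂P) := by gcongr
    _ = _ := by field_simp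
end
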